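/- arXiv:2508.12624 — 7 statements merged into one kernel-verified Lean document; each statement's English description precedes it below -/
import Mathlib

section
/- Let Λ be a symplectic lattice admitting an orthogonal direct sum decomposition Λ = U₁ ⊕ U₂ ⊕ Λ'' with U₁, U₂ isometric to U (i.e., of type with d₁ = d₂ = 1). Then the assignment v ↦ [v*] induces a bijection from the set of Γ_Λ-equivalence classes of primitive vectors of Λ onto the discriminant group D_Λ. -/
noncomputable section

open Submodule

variable {V : Type} [AddCommGroup V] [Module ℚ V]

/-- The dual lattice `Λ^∨ = {v ∈ Λ⊗ℚ : (v, Λ) ⊆ ℤ}` of a lattice `L` (inside the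
ambient rational vector space `V = Λ⊗ℚ`) with respect to the form `B`. -/
def dualLattice (B : V →ₗ[ℚ] V →ₗ[ℚ] ℚ) (L : Submodule ℤ V) : Submodule ℤ V where
  carrier := {v : V | ∀ x ∈ L, ∃ n : ℤ, B v x = (n : ℚ)}
  zero_mem' := fun x _ => ⟨0, by simp⟩
  add_mem' := by
    intro a b ha hb x hx
    obtain ⟨n, hn⟩ := ha x hx
    obtain ⟨m, hm⟩ := hb x hx
    exact ⟨n + m, by rw [map_add, LinearMap.add_apply, hn, hm]; push_cast; ring⟩
  smul_mem' := by
    intro c a ha x hx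
    obtain ⟨n, hn⟩ := ha x hx
    refine ⟨c * n, ?_⟩
    have h1 : B (c • a) x = (B.flip x) (c • a) := rfl
    rw [h1, map_zsmul, LinearMap.flip_apply, hn, zsmul_eq_mul]
    push_cast; ring

/-- A vector `v` is primitive in the lattice `L` if `ℚv ∩ L = ℤv`. -/
def IsPrimitive (L : Submodule ℤ V) (v : V) : Prop :=
  v ∈ L ∧ (Submodule.span ℚ {v}).restrictScalars ℤ ⊓ L = Submodule.span ℤ {v}

/-- `div(v) = d`, i.e. the ideal `(v, L) ⊆ ℤ` is generated by the positive integer `d`. -/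
def HasDiv (B : V →ₗ[ℚ] V →ₗ[ℚ] ℚ) (L : Submodule ℤ V) (v : V) (d : ℕ) : Prop :=
  0 < d ∧ (∀ x ∈ L, ∃ n : ℤ, B v x = (n : ℚ) * (d : ℚ)) ∧ (∃ x ∈ L, B v x = (d : ℚ))

/-- `v* = v / div(v)`. -/
def vstar (v : V) (d : ℕ) : V := ((d : ℚ))⁻¹ • v

lemma vstar_mem {B : V →ₗ[ℚ] V →ₗ[ℚ] ℚ} {L : Submodule ℤ V} {v : V} {d : ℕ}
    (h : HasDiv B L v d) : vstar v d ∈ dualLattice B L := by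
  intro x hx
  obtain ⟨n, hn⟩ := h.2.1 x hx
  refine ⟨n, ?_⟩
  have hd : (d : ℚ) ≠ 0 := Nat.cast_ne_zero.mpr h.1.ne'
  show B (((d : ℚ))⁻¹ • v) x = (n : ℚ)
  rw [map_smul, LinearMap.smul_apply, hn, smul_eq_mul]
  field_simp

/-- The discriminant group `D_Λ = Λ^∨ / Λ`. -/
abbrev DiscGroup (B : V →ₗ[ℚ] V →ₗ[ℚ] ℚ) (L : Submodule ℤ V) :=
  dualLattice B L ⧸ (L.comap (dualLattice B L).subtype)

/-- The class of an element of the dual lattice in the discriminant group. -/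
def discCls (B : V →ₗ[ℚ] V →ₗ[ℚ] ℚ) (L : Submodule ℤ V) (v : dualLattice B L) :
    DiscGroup B L := Submodule.Quotient.mk v

/-- `γ` is an isometry of the lattice `L`, i.e. an element of `Sp(Λ)` (viewed as a
rational linear automorphism of the ambient space preserving `L` and the form). -/
def IsIsometry (B : V →ₗ[ℚ] V →ₗ[ℚ] ℚ) (L : Submodule ℤ V) (γ : V ≃ₗ[ℚ] V) : Prop :=
  (∀ v, v ∈ L ↔ γ v ∈ L) ∧ ∀ v w, B (γ v) (γ w) = B v w

/-- `γ` lies in `Γ_Λ`: it is an isometry of `L` acting trivially on the discriminant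
group, i.e. `γ(v) ≡ v mod Λ` for every `v ∈ Λ^∨`. -/
def InGamma (B : V →ₗ[ℚ] V →ₗ[ℚ] ℚ) (L : Submodule ℤ V) (γ : V ≃ₗ[ℚ] V) : Prop :=
  IsIsometry B L γ ∧ ∀ v ∈ dualLattice B L, γ v - v ∈ L

lemma isometry_dual_mem {B : V →ₗ[ℚ] V →ₗ[ℚ] ℚ} {L : Submodule ℤ V} {γ : V ≃ₗ[ℚ] V}
    (h : IsIsometry B L γ) {u : V} (hu : u ∈ dualLattice B L) :
    γ u ∈ dualLattice B L := by
  intro x hx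
  have hx' : γ.symm x ∈ L := by
    rw [h.1 (γ.symm x), LinearEquiv.apply_symm_apply]
    exact hx
  obtain ⟨n, hn⟩ := hu (γ.symm x) hx'
  refine ⟨n, ?_⟩
  have := h.2 u (γ.symm x)
  rw [LinearEquiv.apply_symm_apply] at this
  rw [this, hn]

/-- The transvection `T_{l,m} : v ↦ v + (l,v)m + (m,v)l` on the rational vector space. -/
def transvection (B : V →ₗ[ℚ] V →ₗ[ℚ] ℚ) (l m : V) : V →ₗ[ℚ] V :=
  LinearMap.id + (B l).smulRight m + (B m).smulRight l

/-- An orthogonal decomposition `Λ = U ⊕ Λ'` with `U` a hyperbolic plane spanned by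
`e, f` with `(e,f) = 1`. -/
def OrthoDecompU (B : V →ₗ[ℚ] V →ₗ[ℚ] ℚ) (L : Submodule ℤ V)
    (e f : V) (L' : Submodule ℤ V) : Prop :=
  e ∈ L ∧ f ∈ L ∧ L' ≤ L ∧ B e f = 1 ∧
  (∀ z ∈ L', B e z = 0 ∧ B f z = 0) ∧
  Submodule.span ℤ {e, f} ⊔ L' = L

/-- An orthogonal decomposition `Λ = U₁ ⊕ U₂ ⊕ Λ''` with `U₁, U₂` hyperbolic planes. -/
def OrthoDecompUU (B : V →ₗ[ℚ] V →ₗ[ℚ] ℚ) (L : Submodule ℤ V)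
    (e₁ f₁ e₂ f₂ : V) (L'' : Submodule ℤ V) : Prop :=
  e₁ ∈ L ∧ f₁ ∈ L ∧ e₂ ∈ L ∧ f₂ ∈ L ∧ L'' ≤ L ∧
  B e₁ f₁ = 1 ∧ B e₂ f₂ = 1 ∧
  B e₁ e₂ = 0 ∧ B e₁ f₂ = 0 ∧ B f₁ e₂ = 0 ∧ B f₁ f₂ = 0 ∧
  (∀ z ∈ L'', B e₁ z = 0 ∧ B f₁ z = 0 ∧ B e₂ z = 0 ∧ B f₂ z = 0) ∧
  Submodule.span ℤ {e₁, f₁} ⊔ Submodule.span ℤ {e₂, f₂} ⊔ L'' = L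

/-- An orthogonal decomposition `Λ = U ⊕ U(p) ⊕ ⋯ ⊕ U(p)`. -/
def OrthoDecompUUp (B : V →ₗ[ℚ] V →ₗ[ℚ] ℚ) (L : Submodule ℤ V) (p : ℕ)
    (e f : V) {ι : Type} (E F : ι → V) : Prop :=
  e ∈ L ∧ f ∈ L ∧ (∀ i, E i ∈ L) ∧ (∀ i, F i ∈ L) ∧
  B e f = 1 ∧ (∀ i, B (E i) (F i) = (p : ℚ)) ∧
  (∀ i, B e (E i) = 0 ∧ B e (F i) = 0 ∧ B f (E i) = 0 ∧ B f (F i) = 0) ∧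
  (∀ i j, i ≠ j → B (E i) (E j) = 0 ∧ B (E i) (F j) = 0 ∧ B (F i) (F j) = 0) ∧
  Submodule.span ℤ ({e, f} ∪ Set.range E ∪ Set.range F) = L

/-- An orthogonal decomposition `Λ = U(d₁) ⊕ ⋯ ⊕ U(d_g)`. -/
def OrthoDecompType (B : V →ₗ[ℚ] V →ₗ[ℚ] ℚ) (L : Submodule ℤ V) {g : ℕ}
    (d : Fin g → ℕ) (E F : Fin g → V) : Prop :=
  (∀ i, E i ∈ L) ∧ (∀ i, F i ∈ L) ∧
  (∀ i, B (E i) (F i) = (d i : ℚ)) ∧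
  (∀ i j, i ≠ j → B (E i) (E j) = 0 ∧ B (E i) (F j) = 0 ∧ B (F i) (F j) = 0) ∧
  Submodule.span ℤ (Set.range E ∪ Set.range F) = L

lemma coe_int_addCircle (n : ℤ) : (((n : ℚ) : AddCircle (1 : ℚ))) = 0 := by
  have hmem : ((n : ℚ)) ∈ AddSubgroup.zmultiples (1 : ℚ) := ⟨n, by simp⟩
  exact (QuotientAddGroup.eq_zero_iff _).mpr hmem

lemma bilin_antisymm (B : V →ₗ[ℚ] V →ₗ[ℚ] ℚ) (halt : ∀ v, B v v = 0) (a b : V) :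
    B a b = - B b a := by
  have h := halt (a + b)
  simp only [map_add, LinearMap.add_apply] at h
  rw [halt a, halt b] at h
  linarith

/-- The `ℚ/ℤ`-valued pairing on the dual lattice. -/
def rationalPairing (B : V →ₗ[ℚ] V →ₗ[ℚ] ℚ) (L : Submodule ℤ V) :
    dualLattice B L →ₗ[ℤ] dualLattice B L →ₗ[ℤ] AddCircle (1 : ℚ) :=
  LinearMap.mk₂ ℤ (fun v w => ((B v.1 w.1 : ℚ) : AddCircle (1 : ℚ)))
    (fun v v' w => by
      beta_reduce
      rw [Submodule.coe_add, map_add, LinearMap.add_apply]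
      exact QuotientAddGroup.mk_add (AddSubgroup.zmultiples (1 : ℚ)) _ _)
    (fun c v w => by
      beta_reduce
      have h1 : B ((c • v : dualLattice B L) : V) (w : V)
          = c • (B (v : V) (w : V)) := by
        have h2 : B ((c • v : dualLattice B L) : V) (w : V)
            = (B.flip (w : V)) ((c • v : dualLattice B L) : V) := rfl
        rw [h2, Submodule.coe_smul, map_zsmul, LinearMap.flip_apply]
      rw [h1]
      exact QuotientAddGroup.mk_zsmul (AddSubgroup.zmultiples (1 : ℚ)) _ _
    )
    (fun v w w' => by
      beta_reduce
      rw [Submodule.coe_add, map_add]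
      exact QuotientAddGroup.mk_add (AddSubgroup.zmultiples (1 : ℚ)) _ _)
    (fun c v w => by
      beta_reduce
      rw [Submodule.coe_smul, map_zsmul]
      exact QuotientAddGroup.mk_zsmul (AddSubgroup.zmultiples (1 : ℚ)) _ _)

/-- The discriminant form on `D_Λ`, with values in `ℚ/ℤ`. -/
def discForm (B : V →ₗ[ℚ] V →ₗ[ℚ] ℚ) (L : Submodule ℤ V) (halt : ∀ v, B v v = 0) :
    DiscGroup B L →ₗ[ℤ] DiscGroup B L →ₗ[ℤ] AddCircle (1 : ℚ) :=
  (Submodule.liftQ _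
    ((Submodule.liftQ _ (rationalPairing B L) (by
      intro v hv
      rw [LinearMap.mem_ker]
      refine LinearMap.ext fun w => ?_
      have hv' : (v : V) ∈ L := hv
      obtain ⟨n, hn⟩ := w.2 (v : V) hv'
      show ((B (v : V) (w : V) : ℚ) : AddCircle (1 : ℚ)) = 0
      have h3 : B (v : V) (w : V) = ((-n : ℤ) : ℚ) := by
        rw [bilin_antisymm B halt, hn]; push_cast; ring
      rw [h3]
      exact coe_int_addCircle _)).flip) (by
      intro w hw
      rw [LinearMap.mem_ker]
      refine LinearMap.ext fun x => ?_
      obtain ⟨v, rfl⟩ := Submodule.Quotient.mk_surjective _ x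
      have hw' : (w : V) ∈ L := hw
      obtain ⟨n, hn⟩ := v.2 (w : V) hw'
      show ((B (v : V) (w : V) : ℚ) : AddCircle (1 : ℚ)) = 0
      rw [hn]
      exact coe_int_addCircle _)).flip

/-- The orthogonal complement of a subgroup of the discriminant group with respect to
the discriminant form. -/
def discOrth (B : V →ₗ[ℚ] V →ₗ[ℚ] ℚ) (L : Submodule ℤ V) (halt : ∀ v, B v v = 0)
    (D' : Submodule ℤ (DiscGroup B L)) : Submodule ℤ (DiscGroup B L) :=
  ⨅ y ∈ D', LinearMap.ker ((discForm B L halt).flip y)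

/-- A splitting element of the discriminant group: `x` of order `d` lies in a subgroup
`D' ≅ (ℤ/d)²` with `D_Λ = D' ⊕ D'^⊥`. -/
def IsSplitElem (B : V →ₗ[ℚ] V →ₗ[ℚ] ℚ) (L : Submodule ℤ V) (halt : ∀ v, B v v = 0)
    (x : DiscGroup B L) : Prop :=
  ∃ D' : Submodule ℤ (DiscGroup B L), x ∈ D' ∧
    Nonempty (D' ≃+ (ZMod (addOrderOf x) × ZMod (addOrderOf x))) ∧
    D' ⊔ discOrth B L halt D' = ⊤ ∧ D' ⊓ discOrth B L halt D' = ⊥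

/-- The orthogonal complement `Λ₁^⊥ = {z ∈ Λ : (z, Λ₁) = 0}` of a sublattice inside `L`. -/
def orthCompIn (B : V →ₗ[ℚ] V →ₗ[ℚ] ℚ) (L L₁ : Submodule ℤ V) : Submodule ℤ V where
  carrier := {z | z ∈ L ∧ ∀ y ∈ L₁, B z y = 0}
  zero_mem' := ⟨L.zero_mem, fun y _ => by simp⟩
  add_mem' := by
    intro a b ha hb
    refine ⟨L.add_mem ha.1 hb.1, fun y hy => ?_⟩
    rw [map_add, LinearMap.add_apply, ha.2 y hy, hb.2 y hy, add_zero]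
  smul_mem' := by
    intro c a ha
    refine ⟨L.smul_mem c ha.1, fun y hy => ?_⟩
    have h1 : B (c • a) y = (B.flip y) (c • a) := rfl
    rw [h1, map_zsmul, LinearMap.flip_apply, ha.2 y hy, smul_zero]

/-- A splitting (primitive) vector: `v` lies in a rank 2 sublattice `Λ₁` with
`Λ = Λ₁ ⊕ Λ₁^⊥` (orthogonal direct sum). -/
def IsSplitVec (B : V →ₗ[ℚ] V →ₗ[ℚ] ℚ) (L : Submodule ℤ V) (v : V) : Prop :=
  ∃ L₁ : Submodule ℤ V, v ∈ L₁ ∧ L₁ ≤ L ∧ Module.finrank ℤ L₁ = 2 ∧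
    L₁ ⊔ orthCompIn B L L₁ = L ∧ L₁ ⊓ orthCompIn B L L₁ = ⊥

end


section EichlerProof

variable {V : Type} [AddCommGroup V] [Module ℚ V]

/-- `Γ_Λ`-equivalence of vectors. -/
def GRel (B : V →ₗ[ℚ] V →ₗ[ℚ] ℚ) (L : Submodule ℤ V) (u w : V) : Prop :=
  ∃ γ : V ≃ₗ[ℚ] V, InGamma B L γ ∧ γ u = w

lemma GRel.refl (B : V →ₗ[ℚ] V →ₗ[ℚ] ℚ) (L : Submodule ℤ V) (u : V) : GRel B L u u :=
  ⟨LinearEquiv.refl ℚ V, ⟨⟨fun _ => Iff.rfl, fun _ _ => rfl⟩, fun v _ => by simp⟩, rfl⟩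

lemma GRel.trans {B : V →ₗ[ℚ] V →ₗ[ℚ] ℚ} {L : Submodule ℤ V} {u v w : V}
    (h1 : GRel B L u v) (h2 : GRel B L v w) : GRel B L u w := by
  obtain ⟨γ, hγ, rfl⟩ := h1
  obtain ⟨δ, hδ, rfl⟩ := h2
  refine ⟨γ.trans δ, ⟨⟨fun v => ?_, fun v w => ?_⟩, fun v hv => ?_⟩, rfl⟩
  · rw [hγ.1.1 v, hδ.1.1 (γ v)]; rfl
  · rw [← hγ.1.2 v w, ← hδ.1.2 (γ v) (γ w)]; rfl
  · have h1 := hδ.2 (γ v) (isometry_dual_mem hγ.1 hv)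
    have h2 := hγ.2 v hv
    have h3 := L.add_mem h1 h2
    rwa [sub_add_sub_cancel] at h3

lemma GRel.symm {B : V →ₗ[ℚ] V →ₗ[ℚ] ℚ} {L : Submodule ℤ V} {u v : V}
    (h1 : GRel B L u v) : GRel B L v u := by
  obtain ⟨γ, hγ, rfl⟩ := h1
  have hiso : IsIsometry B L γ.symm := by
    refine ⟨fun v => ?_, fun v w => ?_⟩
    · rw [hγ.1.1 (γ.symm v), LinearEquiv.apply_symm_apply]
    · rw [← hγ.1.2, LinearEquiv.apply_symm_apply, LinearEquiv.apply_symm_apply]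
  refine ⟨γ.symm, ⟨hiso, fun v hv => ?_⟩, by simp⟩
  have h := hγ.2 _ (isometry_dual_mem hiso hv)
  rw [LinearEquiv.apply_symm_apply] at h
  have := L.neg_mem h
  rwa [neg_sub] at this

/-- symplectic transvection `v ↦ v + k (l,v) l`. -/
def strans (B : V →ₗ[ℚ] V →ₗ[ℚ] ℚ) (halt : ∀ v, B v v = 0) (l : V) (k : ℤ) : V ≃ₗ[ℚ] V :=
  LinearEquiv.ofLinearMap (LinearMap.id + (B l).smulRight ((k : ℚ) • l))
    (LinearMap.id - (B l).smulRight ((k : ℚ) • l))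
    (by ext v; simp [halt])
    (by ext v; simp [halt])

lemma strans_apply (B : V →ₗ[ℚ] V →ₗ[ℚ] ℚ) (halt : ∀ v, B v v = 0) (l : V) (k : ℤ) (v : V) :
    strans B halt l k v = v + (B l v) • ((k : ℚ) • l) := by
  simp [strans]

lemma dual_int {B : V →ₗ[ℚ] V →ₗ[ℚ] ℚ} (halt : ∀ v, B v v = 0) {L : Submodule ℤ V}
    {u l : V} (hu : u ∈ dualLattice B L) (hl : l ∈ L) : ∃ n : ℤ, B l u = n := by
  obtain ⟨n, hn⟩ := hu l hl
  exact ⟨-n, by rw [bilin_antisymm B halt, hn]; push_cast; ring⟩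

lemma le_dual {B : V →ₗ[ℚ] V →ₗ[ℚ] ℚ} {L : Submodule ℤ V}
    (hint : ∀ x ∈ L, ∀ y ∈ L, ∃ n : ℤ, B x y = (n : ℚ)) {x : V} (hx : x ∈ L) :
    x ∈ dualLattice B L := fun y hy => hint x hx y hy

lemma int_smul_mem {L : Submodule ℤ V} {l : V} (hl : l ∈ L) (n : ℤ) : ((n : ℚ) • l) ∈ L := by
  rw [Int.cast_smul_eq_zsmul]; exact L.smul_mem n hl

lemma strans_inGamma {B : V →ₗ[ℚ] V →ₗ[ℚ] ℚ} (halt : ∀ v, B v v = 0) {L : Submodule ℤ V}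
    (hint : ∀ x ∈ L, ∀ y ∈ L, ∃ n : ℤ, B x y = (n : ℚ)) {l : V} (hl : l ∈ L) (k : ℤ) :
    InGamma B L (strans B halt l k) := by
  have key : ∀ v ∈ dualLattice B L, (B l v) • ((k : ℚ) • l) ∈ L := by
    intro v hv
    obtain ⟨n, hn⟩ := dual_int halt hv hl
    rw [hn]
    exact int_smul_mem (int_smul_mem hl k) n
  refine ⟨⟨fun v => ⟨fun hv => ?_, fun hv => ?_⟩, fun v w => ?_⟩, fun v hv => ?_⟩
  · rw [strans_apply]
    exact L.add_mem hv (key v (le_dual hint hv))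
  · have h1 := key _ (le_dual hint hv)
    have h2 := L.sub_mem hv h1
    rw [strans_apply] at h2
    simpa [halt] using h2
  · simp only [strans_apply, map_add, map_smul, LinearMap.add_apply, LinearMap.smul_apply,
      smul_eq_mul, halt]
    rw [bilin_antisymm B halt v l]; ring
  · rw [strans_apply, add_sub_cancel_left]; exact key v hv

/-- one transvection step -/
lemma grel_strans {B : V →ₗ[ℚ] V →ₗ[ℚ] ℚ} (halt : ∀ v, B v v = 0) {L : Submodule ℤ V}
    (hint : ∀ x ∈ L, ∀ y ∈ L, ∃ n : ℤ, B x y = (n : ℚ)) {l : V} (hl : l ∈ L) (k : ℤ) (u : V) :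
    GRel B L u (u + (B l u) • ((k : ℚ) • l)) :=
  ⟨_, strans_inGamma halt hint hl k, strans_apply B halt l k u⟩

lemma GRel.dual {B : V →ₗ[ℚ] V →ₗ[ℚ] ℚ} {L : Submodule ℤ V} {u v : V}
    (h : GRel B L u v) (hu : u ∈ dualLattice B L) : v ∈ dualLattice B L := by
  obtain ⟨γ, hγ, rfl⟩ := h
  exact isometry_dual_mem hγ.1 hu

lemma GRel.sub_mem {B : V →ₗ[ℚ] V →ₗ[ℚ] ℚ} {L : Submodule ℤ V} {u v : V}
    (h : GRel B L u v) (hu : u ∈ dualLattice B L) : v - u ∈ L := by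
  obtain ⟨γ, hγ, rfl⟩ := h
  exact hγ.2 u hu

lemma GRel.unim {B : V →ₗ[ℚ] V →ₗ[ℚ] ℚ} {L : Submodule ℤ V} {u v : V}
    (h : GRel B L u v) (hu : ∃ x ∈ L, B x u = 1) : ∃ x ∈ L, B x v = 1 := by
  obtain ⟨γ, hγ, rfl⟩ := h
  obtain ⟨x, hx, hxu⟩ := hu
  exact ⟨γ x, (hγ.1.1 x).1 hx, by rw [hγ.1.2, hxu]⟩

/-- Euclidean algorithm in the hyperbolic plane. -/
lemma euclid_plane {B : V →ₗ[ℚ] V →ₗ[ℚ] ℚ} (halt : ∀ v, B v v = 0) {L : Submodule ℤ V}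
    (hint : ∀ x ∈ L, ∀ y ∈ L, ∃ n : ℤ, B x y = (n : ℚ)) {e f : V} (he : e ∈ L) (hf : f ∈ L)
    (hef : B e f = 1) :
    ∀ (n : ℕ) (u : V) (a b : ℤ), B f u = a → B e u = b → b.natAbs ≤ n →
      ∃ w, GRel B L u w ∧ B e w = 0 := by
  have hfe : B f e = -1 := by rw [bilin_antisymm B halt, hef]
  intro n
  induction n with
  | zero =>
    intro u a b ha hb hn
    have : b = 0 := by omega
    exact ⟨u, GRel.refl B L u, by rw [hb, this]; simp⟩
  | succ n ih =>
    intro u a b ha hb hn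
    by_cases hb0 : b = 0
    · exact ⟨u, GRel.refl B L u, by rw [hb, hb0]; simp⟩
    -- reduce `a` modulo `b`
    have h1 := grel_strans halt hint he (a / b) u
    set u1 := u + (B e u) • (((a / b : ℤ) : ℚ) • e) with hu1
    have ha1 : B f u1 = ((a % b : ℤ) : ℚ) := by
      have : a % b = a - b * (a / b) := by rw [Int.emod_def]
      rw [this, hu1]; simp only [map_add, map_smul, smul_eq_mul, ha, hb, hfe]; push_cast; ring
    have hb1 : B e u1 = (b : ℚ) := by
      rw [hu1]; simp [halt, hb]
    have hr0 : 0 ≤ a % b := Int.emod_nonneg a hb0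
    have hr1 : a % b < |b| := Int.emod_lt_abs a hb0
    generalize a % b = r at *
    by_cases hr : r = 0
    · subst hr
      have h2 := grel_strans halt hint he 1 u1
      set u2 := u1 + (B e u1) • (((1 : ℤ) : ℚ) • e) with hu2
      have h3 := grel_strans halt hint hf 1 u2
      refine ⟨_, (h1.trans h2).trans h3, ?_⟩
      have hb2 : B e u2 = b := by rw [hu2]; simp [halt, hb1]
      have ha2 : B f u2 = -b := by rw [hu2]; simp [ha1, hb1, hfe]
      simp [hb2, ha2, hef]
    · have h2 := grel_strans halt hint hf (-(b / r)) u1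
      obtain ⟨w, hw, hw0⟩ := ih (u1 + (B f u1) • (((-(b / r) : ℤ) : ℚ) • f)) r (b % r)
        (by simp [halt, ha1])
        (by
          rw [Int.emod_def]
          simp only [map_add, map_smul, smul_eq_mul, ha1, hb1, hef]; push_cast; ring)
        (by
          have := Int.emod_nonneg b hr
          have := Int.emod_lt_of_pos b (lt_of_le_of_ne hr0 (Ne.symm hr))
          rw [Int.abs_eq_natAbs] at hr1
          omega)
      exact ⟨w, (h1.trans h2).trans hw, hw0⟩

lemma step_A {B : V →ₗ[ℚ] V →ₗ[ℚ] ℚ} (halt : ∀ v, B v v = 0) {L : Submodule ℤ V}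
    (hint : ∀ x ∈ L, ∀ y ∈ L, ∃ n : ℤ, B x y = (n : ℚ)) {e f : V} (he : e ∈ L) (hf : f ∈ L)
    (hef : B e f = 1) {u : V} (hu : u ∈ dualLattice B L) (hun : ∃ x ∈ L, B x u = 1) :
    ∃ w, GRel B L u w ∧ B f w = 1 := by
  have hfe : B f e = -1 := by rw [bilin_antisymm B halt, hef]
  obtain ⟨a, ha⟩ := dual_int halt hu hf
  obtain ⟨b, hb⟩ := dual_int halt hu he
  obtain ⟨w, hw, hw0⟩ := euclid_plane halt hint he hf hef _ u a b ha hb le_rfl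
  obtain ⟨x, hx, hxw⟩ := hw.unim hun
  obtain ⟨c, hc⟩ := dual_int halt (hw.dual hu) hf
  obtain ⟨d, hd⟩ := hint f hf x hx
  have h2 := grel_strans halt hint (L.add_mem hx (int_smul_mem he (c + d - 1))) 1 w
  refine ⟨_, hw.trans h2, ?_⟩
  simp only [map_add, map_smul, smul_eq_mul, LinearMap.add_apply, LinearMap.smul_apply, hw0, hxw,
    hc, hd, hfe]
  push_cast; ring

lemma step_B {B : V →ₗ[ℚ] V →ₗ[ℚ] ℚ} (halt : ∀ v, B v v = 0) {L : Submodule ℤ V}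
    (hint : ∀ x ∈ L, ∀ y ∈ L, ∃ n : ℤ, B x y = (n : ℚ)) {f : V} (hf : f ∈ L)
    {u w : V} (hu : u ∈ dualLattice B L) (hsub : w - u ∈ L)
    (hfu : B f u = 1) (hfw : B f w = 1) : GRel B L u w := by
  obtain ⟨c, hc⟩ := dual_int halt hu hsub
  have h1 := grel_strans halt hint (L.add_mem hsub (int_smul_mem hf (1 - c))) 1 u
  have h2 := grel_strans halt hint hf (c - 1)
    (u + (B (w - u + ((1 - c : ℤ) : ℚ) • f) u) • (((1 : ℤ) : ℚ) • (w - u + ((1 - c : ℤ) : ℚ) • f)))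
  have h3 := h1.trans h2
  have e1 : B (w - u + ((1 - c : ℤ) : ℚ) • f) u = 1 := by
    rw [map_add, LinearMap.add_apply, hc, map_smul, LinearMap.smul_apply, hfu]; push_cast
    simp
  rw [e1] at h3
  have e2 : B f (u + (1 : ℚ) • (((1 : ℤ) : ℚ) • (w - u + ((1 - c : ℤ) : ℚ) • f))) = 1 := by
    simp [halt, hfu, hfw]
  rw [e2] at h3
  convert h3 using 1
  push_cast
  module

lemma unim_transitive {B : V →ₗ[ℚ] V →ₗ[ℚ] ℚ} (halt : ∀ v, B v v = 0) {L : Submodule ℤ V}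
    (hint : ∀ x ∈ L, ∀ y ∈ L, ∃ n : ℤ, B x y = (n : ℚ)) {e f : V} (he : e ∈ L) (hf : f ∈ L)
    (hef : B e f = 1) {u w : V} (hu : u ∈ dualLattice B L) (hw : w ∈ dualLattice B L)
    (hun : ∃ x ∈ L, B x u = 1) (hwn : ∃ x ∈ L, B x w = 1) (hsub : w - u ∈ L) :
    GRel B L u w := by
  obtain ⟨u', hu', hfu⟩ := step_A halt hint he hf hef hu hun
  obtain ⟨w', hw', hfw⟩ := step_A halt hint he hf hef hw hwn
  have h : w' - u' ∈ L := by
    have := L.sub_mem (L.add_mem (hw'.sub_mem hw) hsub) (hu'.sub_mem hu)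
    convert this using 1
    abel
  exact (hu'.trans (step_B halt hint hf (hu'.dual hu) h hfu hfw)).trans hw'.symm

lemma vstar_unim {B : V →ₗ[ℚ] V →ₗ[ℚ] ℚ} (halt : ∀ v, B v v = 0) {L : Submodule ℤ V}
    {v : V} {d : ℕ} (h : HasDiv B L v d) : ∃ x ∈ L, B x (vstar v d) = 1 := by
  obtain ⟨hd, -, x, hx, hvx⟩ := h
  have hd' : (d : ℚ) ≠ 0 := Nat.cast_ne_zero.mpr hd.ne'
  refine ⟨-x, L.neg_mem hx, ?_⟩
  rw [bilin_antisymm B halt, vstar]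
  simp [hvx, hd']

lemma smul_vstar {v : V} {d : ℕ} (hd : 0 < d) : (d : ℚ) • vstar v d = v := by
  have hd' : (d : ℚ) ≠ 0 := Nat.cast_ne_zero.mpr hd.ne'
  rw [vstar, smul_smul, mul_inv_cancel₀ hd', one_smul]

lemma div_dvd {B : V →ₗ[ℚ] V →ₗ[ℚ] ℚ} {L : Submodule ℤ V}
    {v w : V} {dv dw : ℕ} (hv : IsPrimitive L v) (hw : IsPrimitive L w)
    (hdv : HasDiv B L v dv) (hdw : HasDiv B L w dw)
    (hsub : vstar v dv - vstar w dw ∈ L) : dv ∣ dw := by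
  have hd' : (dv : ℚ) ≠ 0 := Nat.cast_ne_zero.mpr hdv.1.ne'
  have hv0 : v ≠ 0 := by
    rintro rfl
    obtain ⟨-, -, x, -, hx⟩ := hdv
    simp at hx
    exact hd' hx.symm
  have h1 := L.add_mem (int_smul_mem hsub dw) hw.1
  have h2 : ((dw : ℚ) * (dv : ℚ)⁻¹) • v ∈ L := by
    convert h1 using 1
    rw [Int.cast_natCast, smul_sub, smul_vstar hdw.1, sub_add_cancel, vstar, smul_smul]
  have h3 : ((dw : ℚ) * (dv : ℚ)⁻¹) • v ∈ Submodule.span ℤ {v} := by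
    rw [← hv.2]
    exact ⟨Submodule.smul_mem _ _ (Submodule.mem_span_singleton_self v), h2⟩
  obtain ⟨n, hn⟩ := Submodule.mem_span_singleton.1 h3
  rw [← Int.cast_smul_eq_zsmul ℚ] at hn
  have h4 : (n : ℚ) = (dw : ℚ) * (dv : ℚ)⁻¹ := smul_left_injective ℚ hv0 hn
  have h5 : (dw : ℤ) = dv * n := by
    have : (dw : ℚ) = dv * n := by rw [h4]; field_simp
    exact_mod_cast this
  exact Int.natCast_dvd_natCast.1 ⟨n, h5⟩

lemma exists_mul_mem {L : Submodule ℤ V} (hspan : Submodule.span ℚ (L : Set V) = ⊤) (v : V) :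
    ∃ n : ℕ, 0 < n ∧ (n : ℚ) • v ∈ L := by
  have hv : v ∈ Submodule.span ℚ (L : Set V) := by rw [hspan]; trivial
  induction hv using Submodule.span_induction with
  | mem x hx => exact ⟨1, one_pos, by simpa using hx⟩
  | zero => exact ⟨1, one_pos, by simp⟩
  | add x y _ _ hx hy =>
    obtain ⟨n, hn, hnx⟩ := hx
    obtain ⟨m, hm, hmy⟩ := hy
    refine ⟨n * m, Nat.mul_pos hn hm, ?_⟩
    have := L.add_mem (int_smul_mem hnx m) (int_smul_mem hmy n)
    convert this using 1
    push_cast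
    module
  | smul q x _ hx =>
    obtain ⟨n, hn, hnx⟩ := hx
    refine ⟨n * q.den, Nat.mul_pos hn q.den_pos, ?_⟩
    have := int_smul_mem hnx q.num
    convert this using 1
    rw [smul_smul, smul_smul]
    congr 1
    push_cast
    rw [mul_assoc, mul_comm (q.den : ℚ), Rat.mul_den_eq_num, mul_comm]

lemma exists_primitive {B : V →ₗ[ℚ] V →ₗ[ℚ] ℚ} {L : Submodule ℤ V}
    (hint : ∀ x ∈ L, ∀ y ∈ L, ∃ n : ℤ, B x y = (n : ℚ))
    (hspan : Submodule.span ℚ (L : Set V) = ⊤) {f u : V} (hf : f ∈ L)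
    (hu : u ∈ dualLattice B L) (huf : B u f = 1) :
    ∃ (v : V) (d : ℕ), IsPrimitive L v ∧ HasDiv B L v d ∧ vstar v d = u := by
  classical
  have hex := exists_mul_mem hspan u
  set d := Nat.find hex with hd
  obtain ⟨hd0, hdu⟩ := Nat.find_spec hex
  have hmin : ∀ m : ℕ, 0 < m → (m : ℚ) • u ∈ L → d ≤ m := fun m h1 h2 => Nat.find_min' hex ⟨h1, h2⟩
  rw [← hd] at hd0 hdu
  clear_value d
  have hd' : (d : ℚ) ≠ 0 := Nat.cast_ne_zero.mpr hd0.ne'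
  refine ⟨(d : ℚ) • u, d, ⟨hdu, ?_⟩, ⟨hd0, ?_, f, hf, by simp [huf]⟩, ?_⟩
  · apply le_antisymm
    · rintro y ⟨hy1, hy2⟩
      obtain ⟨q, rfl⟩ := Submodule.mem_span_singleton.1
        (show y ∈ Submodule.span ℚ {(d : ℚ) • u} from hy1)
      have hy3 : q • (d : ℚ) • u ∈ L := hy2
      obtain ⟨n, hn⟩ := hint _ hy3 f hf
      have hn' : q * d = n := by
        rw [← hn]; simp [huf]
      have hnu : (n : ℚ) • u ∈ L := by rw [← hn', mul_smul]; exact hy3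
      have hr : ((n % d : ℤ) : ℚ) • u ∈ L := by
        have := L.sub_mem hnu (int_smul_mem hdu (n / d))
        convert this using 1
        rw [Int.emod_def]
        push_cast
        module
      have hr0 : 0 ≤ n % (d : ℤ) := Int.emod_nonneg n (by omega)
      have hr1 : n % (d : ℤ) < d := Int.emod_lt_of_pos n (by omega)
      have hrz : n % (d : ℤ) = 0 := by
        by_contra hne
        have := hmin (n % (d : ℤ)).toNat (by omega) (by
          rw [← Int.cast_natCast, Int.toNat_of_nonneg hr0]; exact hr)
        omega
      obtain ⟨k, hk⟩ := Int.dvd_of_emod_eq_zero hrz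
      rw [Submodule.mem_span_singleton]
      refine ⟨k, ?_⟩
      rw [← Int.cast_smul_eq_zsmul ℚ]
      congr 1
      have : q * d = k * d := by rw [hn', hk]; push_cast; ring
      exact (mul_right_cancel₀ hd' this).symm
    · rw [Submodule.span_singleton_le_iff_mem]
      exact ⟨Submodule.mem_span_singleton_self _, hdu⟩
  · intro x hx
    obtain ⟨n, hn⟩ := hu x hx
    exact ⟨n, by rw [map_smul, LinearMap.smul_apply, hn, smul_eq_mul, mul_comm]⟩
  · rw [vstar, smul_smul, inv_mul_cancel₀ hd', one_smul]

end EichlerProof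

/-- **Symplectic Eichler criterion.** If `Λ = U₁ ⊕ U₂ ⊕ Λ''` (type with `d₁ = d₂ = 1`),
then `v ↦ [v*]` induces a bijection from the set of `Γ_Λ`-equivalence classes of
primitive vectors of `Λ` onto the discriminant group `D_Λ`. -/
theorem symplectic_eichler_criterion
    (V : Type) [AddCommGroup V] [Module ℚ V]
    (B : V →ₗ[ℚ] V →ₗ[ℚ] ℚ)
    (halt : ∀ v, B v v = 0)
    (hnd : ∀ v : V, (∀ w, B v w = 0) → v = 0)
    (L : Submodule ℤ V) (hfg : L.FG)
    (hspan : Submodule.span ℚ (L : Set V) = ⊤)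
    (hint : ∀ x ∈ L, ∀ y ∈ L, ∃ n : ℤ, B x y = (n : ℚ))
    (e₁ f₁ e₂ f₂ : V) (L'' : Submodule ℤ V)
    (hdec : OrthoDecompUU B L e₁ f₁ e₂ f₂ L'') :
    (∀ (v w : V) (dv dw : ℕ) (hv : IsPrimitive L v) (hw : IsPrimitive L w)
        (hdv : HasDiv B L v dv) (hdw : HasDiv B L w dw),
        (∃ γ : V ≃ₗ[ℚ] V, InGamma B L γ ∧ γ v = w) ↔
          discCls B L ⟨vstar v dv, vstar_mem hdv⟩ =
            discCls B L ⟨vstar w dw, vstar_mem hdw⟩) ∧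
    (∀ x : DiscGroup B L, ∃ (v : V) (d : ℕ) (hv : IsPrimitive L v) (hd : HasDiv B L v d),
        discCls B L ⟨vstar v d, vstar_mem hd⟩ = x) := by
  obtain ⟨he, hf, -, -, -, hef, -⟩ := hdec
  have hfe : B f₁ e₁ = -1 := by rw [bilin_antisymm B halt, hef]
  refine ⟨?_, ?_⟩
  · intro v w dv dw hv hw hdv hdw
    have hiff : discCls B L ⟨vstar v dv, vstar_mem hdv⟩ = discCls B L ⟨vstar w dw, vstar_mem hdw⟩
        ↔ vstar v dv - vstar w dw ∈ L := by
      unfold discCls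
      rw [Submodule.Quotient.eq]
      rfl
    rw [hiff]
    constructor
    · rintro ⟨γ, hγ, rfl⟩
      have hd : dv = dw := by
        apply Nat.dvd_antisymm
        · obtain ⟨-, -, x, hx, hx'⟩ := hdw
          obtain ⟨n, hn⟩ := hdv.2.1 (γ.symm x) ((hγ.1.1 _).2 (by simpa using hx))
          have h1 := hγ.1.2 v (γ.symm x)
          rw [LinearEquiv.apply_symm_apply, hx', hn] at h1
          exact Int.natCast_dvd_natCast.1 ⟨n, by rw [mul_comm]; exact_mod_cast h1⟩
        · obtain ⟨-, -, x, hx, hx'⟩ := hdv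
          obtain ⟨n, hn⟩ := hdw.2.1 (γ x) ((hγ.1.1 _).1 hx)
          have h1 := hγ.1.2 v x
          rw [hx', hn] at h1
          exact Int.natCast_dvd_natCast.1 ⟨n, by rw [mul_comm]; exact_mod_cast h1.symm⟩
      subst hd
      have h := L.neg_mem (hγ.2 _ (vstar_mem hdv))
      rw [neg_sub] at h
      have h2 : γ (vstar v dv) = vstar (γ v) dv := by simp [vstar]
      rwa [h2] at h
    · intro hsub
      have hsub' : vstar w dw - vstar v dv ∈ L := by
        have := L.neg_mem hsub
        rwa [neg_sub] at this
      have hd : dv = dw :=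
        Nat.dvd_antisymm (div_dvd hv hw hdv hdw hsub) (div_dvd hw hv hdw hdv hsub')
      subst hd
      obtain ⟨γ, hγ, h⟩ := unim_transitive halt hint he hf hef (vstar_mem hdv) (vstar_mem hdw)
        (vstar_unim halt hdv) (vstar_unim halt hdw) hsub'
      refine ⟨γ, hγ, ?_⟩
      rw [← smul_vstar (v := v) hdv.1, map_smul, h, smul_vstar hdv.1]
  · intro x
    obtain ⟨⟨u, hu⟩, rfl⟩ := Submodule.Quotient.mk_surjective _ x
    obtain ⟨a, ha⟩ := hu f₁ hf
    have hc := int_smul_mem he (1 - a)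
    obtain ⟨v, d, hv, hd, hvd⟩ := exists_primitive (B := B) (L := L) hint hspan hf
      (u := u + ((1 - a : ℤ) : ℚ) • e₁) ((dualLattice B L).add_mem hu (le_dual hint hc))
      (by simp [ha, hef])
    refine ⟨v, d, hv, hd, ?_⟩
    unfold discCls
    rw [Submodule.Quotient.eq]
    show vstar v d - u ∈ L
    rw [hvd, add_sub_cancel_left]
    exact hc
end

section
/- Let Λ be a symplectic lattice admitting an orthogonal direct sum decomposition Λ = U₁ ⊕ U₂ ⊕ Λ'' with U₁, U₂ isometric to U. For any subgroup Γ of Sp(Λ) containing Γ_Λ, with G the image of Γ under the reduction map Sp(Λ) → Sp(D_Λ), the assignment v ↦ [v*] induces a bijection from the set of Γ-equivalence classes of primitive vectors of Λ onto the quotient set D_Λ/G. -/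
section EichlerAux

variable {V : Type} [AddCommGroup V] [Module ℚ V]

lemma aux_qsmul_mem {L : Submodule ℤ V} {x : V} (hx : x ∈ L) (n : ℤ) : (n : ℚ) • x ∈ L := by
  rw [Int.cast_smul_eq_zsmul]; exact L.smul_mem n hx

lemma aux_transvec (B : V →ₗ[ℚ] V →ₗ[ℚ] ℚ) (halt : ∀ v, B v v = 0) (L : Submodule ℤ V)
    (hint : ∀ x ∈ L, ∀ y ∈ L, ∃ n : ℤ, B x y = (n : ℚ)) (l : V) (hl : l ∈ L) (k : ℤ) :
    ∃ γ : V ≃ₗ[ℚ] V, InGamma B L γ ∧ ∀ x, γ x = x + ((k : ℚ) * B l x) • l := by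
  let T : ℚ → V →ₗ[ℚ] V := fun c => LinearMap.id + c • (B l).smulRight l
  have hT : ∀ c x, T c x = x + (c * B l x) • l := by
    intro c x; simp [T, smul_smul]
  have hTT : ∀ c x, T c (T (-c) x) = x := by
    intro c x
    rw [hT, hT]
    simp only [map_add, map_smul, halt, smul_eq_mul]
    module
  let γ : V ≃ₗ[ℚ] V := LinearEquiv.ofLinear (T k) (T (-k))
    (by ext x; exact hTT k x) (by ext x; have := hTT (-k) x; rw [neg_neg] at this; exact this)
  have hγ : ∀ x, γ x = x + ((k : ℚ) * B l x) • l := fun x => hT k x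
  have hdual : ∀ v, (∃ n : ℤ, B l v = n) → γ v - v ∈ L := by
    rintro v ⟨n, hn⟩
    rw [hγ, hn, add_sub_cancel_left]
    exact_mod_cast aux_qsmul_mem hl (k * n)
  refine ⟨γ, ⟨⟨fun v => ⟨fun hv => ?_, fun hv => ?_⟩, fun v w => ?_⟩, fun v hv => ?_⟩, hγ⟩
  · have := L.add_mem (hdual v (hint l hl v hv)) hv
    simpa using this
  · have h1 : B l v = B l (γ v) := by
      rw [hγ]; simp [halt]
    have := L.sub_mem hv (hdual v (by rw [h1]; exact hint l hl _ hv))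
    simpa using this
  · rw [hγ, hγ]
    simp only [map_add, map_smul, halt, smul_eq_mul, LinearMap.add_apply, LinearMap.smul_apply]
    rw [bilin_antisymm B halt v l]; ring
  · obtain ⟨n, hn⟩ := hv l hl
    exact hdual v ⟨-n, by rw [bilin_antisymm B halt, hn]; simp⟩

lemma aux_mul {B : V →ₗ[ℚ] V →ₗ[ℚ] ℚ} {L : Submodule ℤ V} {γ δ : V ≃ₗ[ℚ] V}
    (h : InGamma B L γ) (k : InGamma B L δ) : InGamma B L (γ * δ) := by
  refine ⟨⟨fun v => ?_, fun v w => ?_⟩, fun v hv => ?_⟩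
  · rw [LinearEquiv.mul_apply, ← h.1.1, ← k.1.1]
  · rw [LinearEquiv.mul_apply, LinearEquiv.mul_apply, h.1.2, k.1.2]
  · rw [LinearEquiv.mul_apply]
    have := L.add_mem (h.2 _ (isometry_dual_mem k.1 hv)) (k.2 v hv)
    simpa using this

lemma aux_inv {B : V →ₗ[ℚ] V →ₗ[ℚ] ℚ} {L : Submodule ℤ V} {γ : V ≃ₗ[ℚ] V}
    (h : InGamma B L γ) : InGamma B L γ.symm := by
  have h1 : IsIsometry B L γ.symm := by
    refine ⟨fun v => ?_, fun v w => ?_⟩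
    · rw [h.1.1 (γ.symm v), LinearEquiv.apply_symm_apply]
    · rw [← h.1.2, LinearEquiv.apply_symm_apply, LinearEquiv.apply_symm_apply]
  refine ⟨h1, fun v hv => ?_⟩
  have := L.neg_mem (h.2 _ (isometry_dual_mem h1 hv))
  simpa using this

lemma aux_A (B : V →ₗ[ℚ] V →ₗ[ℚ] ℚ) (halt : ∀ v, B v v = 0) (L : Submodule ℤ V)
    (hint : ∀ x ∈ L, ∀ y ∈ L, ∃ n : ℤ, B x y = (n : ℚ)) (a b f : V)
    (ha : a ∈ dualLattice B L) (hab : b - a ∈ L) (hf : f ∈ L)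
    (haf : B a f = 1) (hbf : B b f = 1) :
    ∃ γ : V ≃ₗ[ℚ] V, InGamma B L γ ∧ γ a = b := by
  obtain ⟨n, hn⟩ := ha _ hab
  rw [map_sub, halt, sub_zero] at hn
  have hfa : B f a = -1 := by rw [bilin_antisymm B halt, haf]
  have hfb : B f b = -1 := by rw [bilin_antisymm B halt, hbf]
  obtain ⟨γ₁, h₁, e₁⟩ := aux_transvec B halt L hint f hf (1 - n)
  have hl : b - (a + (((n - 1 : ℤ) : ℚ)) • f) ∈ L := by
    rw [← sub_sub]; exact L.sub_mem hab (aux_qsmul_mem hf _)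
  obtain ⟨γ₂, h₂, e₂⟩ := aux_transvec B halt L hint _ hl (-1)
  refine ⟨γ₂ * γ₁, aux_mul h₂ h₁, ?_⟩
  have e3 : γ₁ a = a + (((n - 1 : ℤ) : ℚ)) • f := by
    rw [e₁, hfa]; push_cast; congr 2; ring
  have hba : B b a = -n := by rw [bilin_antisymm B halt, hn]
  have e4 : B (b - (a + (((n - 1 : ℤ) : ℚ)) • f)) (a + (((n - 1 : ℤ) : ℚ)) • f) = -1 := by
    rw [map_sub, LinearMap.sub_apply, halt, map_add, map_smul, hba, hbf]
    push_cast; simp only [smul_eq_mul]; ring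
  rw [LinearEquiv.mul_apply, e3, e₂, e4]
  norm_num

/-- a vector of the second plane orthogonal to `a`, completed to a hyperbolic pair. -/
lemma aux_plane (x y : ℤ) : ∃ p q s t : ℤ, p * x + q * y = 0 ∧ p * t - q * s = 1 := by
  by_cases h : x = 0 ∧ y = 0
  · exact ⟨1, 0, 0, 1, by simp [h.1, h.2], by simp⟩
  · obtain ⟨g, x', y', hg, hco, hx, hy⟩ := Int.exists_gcd_one' (m := x) (n := y)
      (Nat.pos_of_ne_zero (by rwa [Ne, Int.gcd_eq_zero_iff]))
    obtain ⟨u, v, huv⟩ := Int.isCoprime_iff_gcd_eq_one.mpr hco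
    exact ⟨y', -x', u, v, by rw [hx, hy]; ring, by linarith⟩

lemma aux_B (B : V →ₗ[ℚ] V →ₗ[ℚ] ℚ) (halt : ∀ v, B v v = 0) (L : Submodule ℤ V)
    (hint : ∀ x ∈ L, ∀ y ∈ L, ∃ n : ℤ, B x y = (n : ℚ))
    (e₁ f₁ e₂ f₂ : V) (he1 : e₁ ∈ L) (hf1 : f₁ ∈ L) (he2 : e₂ ∈ L) (hf2 : f₂ ∈ L)
    (h11 : B e₁ f₁ = 1) (h22 : B e₂ f₂ = 1)
    (hfe : B f₁ e₂ = 0) (hff : B f₁ f₂ = 0) (a : V)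
    (ha : a ∈ dualLattice B L) (hau : ∃ x ∈ L, B a x = 1) :
    ∃ c, c - a ∈ L ∧ B c f₁ = 1 ∧ ∃ γ : V ≃ₗ[ℚ] V, InGamma B L γ ∧ γ a = c := by
  obtain ⟨x, hx⟩ := ha e₂ he2
  obtain ⟨y, hy⟩ := ha f₂ hf2
  obtain ⟨p, q, s, t, h0, h1⟩ := aux_plane x y
  have h0' : (p : ℚ) * x + q * y = 0 := by exact_mod_cast h0
  have h1' : (p : ℚ) * t - q * s = 1 := by exact_mod_cast h1
  obtain ⟨e, he, hae, f', hf', hef, hf1f⟩ : ∃ e ∈ L, B a e = 0 ∧ ∃ f' ∈ L,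
      B e f' = 1 ∧ B f' f₁ = 0 := by
    refine ⟨(p : ℚ) • e₂ + (q : ℚ) • f₂, L.add_mem (aux_qsmul_mem he2 _) (aux_qsmul_mem hf2 _),
      ?_, (s : ℚ) • e₂ + (t : ℚ) • f₂, L.add_mem (aux_qsmul_mem he2 _) (aux_qsmul_mem hf2 _),
      ?_, ?_⟩
    · simp only [map_add, map_smul, hx, hy, smul_eq_mul]; exact h0'
    · have h22' : B f₂ e₂ = -1 := by rw [bilin_antisymm B halt, h22]
      simp only [map_add, map_smul, LinearMap.add_apply, LinearMap.smul_apply, halt, h22, h22',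
        smul_eq_mul]
      linarith
    · rw [bilin_antisymm B halt]
      simp [hfe, hff]
  obtain ⟨g, hg, hag⟩ := hau
  obtain ⟨r, hr⟩ := hint g hg f' hf'
  -- adjust `g` by a multiple of `e` so that it pairs to one with `f'`
  set h := g + ((1 - r : ℤ) : ℚ) • e with hh
  have hhL : h ∈ L := L.add_mem hg (aux_qsmul_mem he _)
  have hah : B a h = 1 := by simp [hh, hag, hae]
  have hf'h : B f' h = -1 := by
    rw [bilin_antisymm B halt, hh]; simp [hr, hef]
  obtain ⟨u, hu⟩ := hint e₁ he1 h hhL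
  obtain ⟨w, hw⟩ := ha f₁ hf1
  set l := ((1 - w : ℤ) : ℚ) • (e₁ + (u : ℚ) • f') with hl
  have hlL : l ∈ L := aux_qsmul_mem (L.add_mem he1 (aux_qsmul_mem hf' _)) _
  refine ⟨a + l, by simpa using hlL, ?_, ?_⟩
  · simp [hl, hw, h11, hf1f]
  · refine aux_A B halt L hint a (a + l) h ha (by simpa using hlL) hhL hah ?_
    simp [hl, hah, hu, hf'h]

lemma aux_E (B : V →ₗ[ℚ] V →ₗ[ℚ] ℚ) (halt : ∀ v, B v v = 0) (L : Submodule ℤ V)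
    (hint : ∀ x ∈ L, ∀ y ∈ L, ∃ n : ℤ, B x y = (n : ℚ))
    (e₁ f₁ e₂ f₂ : V) (he1 : e₁ ∈ L) (hf1 : f₁ ∈ L) (he2 : e₂ ∈ L) (hf2 : f₂ ∈ L)
    (h11 : B e₁ f₁ = 1) (h22 : B e₂ f₂ = 1)
    (hfe : B f₁ e₂ = 0) (hff : B f₁ f₂ = 0) (a b : V)
    (ha : a ∈ dualLattice B L) (hau : ∃ x ∈ L, B a x = 1)
    (hb : b ∈ dualLattice B L) (hbu : ∃ x ∈ L, B b x = 1) (hab : b - a ∈ L) :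
    ∃ γ : V ≃ₗ[ℚ] V, InGamma B L γ ∧ γ a = b := by
  obtain ⟨c, hca, hc, γ, hγ, rfl⟩ := aux_B B halt L hint e₁ f₁ e₂ f₂ he1 hf1 he2 hf2 h11 h22
    hfe hff a ha hau
  obtain ⟨c', hcb, hc', δ, hδ, rfl⟩ := aux_B B halt L hint e₁ f₁ e₂ f₂ he1 hf1 he2 hf2 h11 h22
    hfe hff b hb hbu
  obtain ⟨ε, hε, e⟩ := aux_A B halt L hint (γ a) (δ b) f₁ (isometry_dual_mem hγ.1 ha)
    (by have := L.sub_mem (L.add_mem hcb hab) hca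
        convert this using 1; abel) hf1 hc hc'
  refine ⟨δ.symm * (ε * γ), aux_mul (aux_inv hδ) (aux_mul hε hγ), ?_⟩
  simp [LinearEquiv.mul_apply, e]

lemma aux_div_unique {B : V →ₗ[ℚ] V →ₗ[ℚ] ℚ} {L : Submodule ℤ V} {v : V} {d d' : ℕ}
    (h : HasDiv B L v d) (h' : HasDiv B L v d') : d = d' := by
  have key : ∀ {d d' : ℕ}, HasDiv B L v d → HasDiv B L v d' → d ∣ d' := by
    intro d d' h h'
    obtain ⟨x, hx, e⟩ := h'.2.2
    obtain ⟨n, hn⟩ := h.2.1 x hx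
    rw [hn] at e
    have : n * d = d' := by exact_mod_cast e
    exact Int.natCast_dvd_natCast.mp ⟨n, by rw [← this]; ring⟩
  exact Nat.dvd_antisymm (key h h') (key h' h)

lemma aux_div_map {B : V →ₗ[ℚ] V →ₗ[ℚ] ℚ} {L : Submodule ℤ V} {v : V} {d : ℕ}
    {γ : V ≃ₗ[ℚ] V} (hγ : IsIsometry B L γ) (h : HasDiv B L v d) : HasDiv B L (γ v) d := by
  refine ⟨h.1, fun x hx => ?_, ?_⟩
  · obtain ⟨n, hn⟩ := h.2.1 (γ.symm x) (by rw [hγ.1]; simpa using hx)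
    refine ⟨n, ?_⟩
    have h2 := hγ.2 v (γ.symm x)
    rw [LinearEquiv.apply_symm_apply] at h2
    rw [← hn, h2]
  · obtain ⟨x, hx, e⟩ := h.2.2
    exact ⟨γ x, (hγ.1 x).1 hx, by rw [hγ.2, e]⟩

lemma aux_star_unit {B : V →ₗ[ℚ] V →ₗ[ℚ] ℚ} {L : Submodule ℤ V} {v : V} {d : ℕ}
    (h : HasDiv B L v d) : ∃ x ∈ L, B (vstar v d) x = 1 := by
  obtain ⟨x, hx, e⟩ := h.2.2
  refine ⟨x, hx, ?_⟩
  have hd : (d : ℚ) ≠ 0 := Nat.cast_ne_zero.mpr h.1.ne'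
  simp [vstar, e, hd]

lemma aux_ne {B : V →ₗ[ℚ] V →ₗ[ℚ] ℚ} {L : Submodule ℤ V} {v : V} {d : ℕ}
    (h : HasDiv B L v d) : v ≠ 0 := by
  rintro rfl
  obtain ⟨x, hx, e⟩ := h.2.2
  have := h.1
  rw [map_zero, LinearMap.zero_apply] at e
  have e' : 0 = d := by exact_mod_cast e
  omega

/-- multiples of `v*` lying in the lattice -/
lemma aux_order {B : V →ₗ[ℚ] V →ₗ[ℚ] ℚ} {L : Submodule ℤ V} {v : V} {d : ℕ}
    (hv : IsPrimitive L v) (h : HasDiv B L v d) (m : ℤ) :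
    (m : ℚ) • vstar v d ∈ L ↔ (d : ℤ) ∣ m := by
  have hd : (d : ℚ) ≠ 0 := Nat.cast_ne_zero.mpr h.1.ne'
  constructor
  · intro hm
    have : (m : ℚ) • vstar v d ∈ (Submodule.span ℚ {v}).restrictScalars ℤ ⊓ L := by
      refine ⟨?_, hm⟩
      rw [vstar, smul_smul]
      exact Submodule.smul_mem _ _ (Submodule.mem_span_singleton_self v)
    rw [hv.2, Submodule.mem_span_singleton] at this
    obtain ⟨n, hn⟩ := this
    rw [← Int.cast_smul_eq_zsmul ℚ, vstar, smul_smul] at hn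
    have this : (n : ℚ) = m * (d : ℚ)⁻¹ := smul_left_injective ℚ (aux_ne h) hn
    refine ⟨n, ?_⟩
    have h2 : (m : ℚ) = d * n := by
      rw [this]; field_simp
    exact_mod_cast h2
  · rintro ⟨n, rfl⟩
    have : (((d * n : ℤ)) : ℚ) • vstar v d = (n : ℚ) • v := by
      rw [vstar, smul_smul]; congr 1; push_cast; field_simp
    rw [this]
    exact aux_qsmul_mem hv.1 n

lemma aux_tors (L : Submodule ℤ V) (hspan : Submodule.span ℚ (L : Set V) = ⊤) (u : V) :
    ∃ n : ℕ, 0 < n ∧ n • u ∈ L := by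
  have hu : u ∈ Submodule.span ℚ (L : Set V) := by rw [hspan]; trivial
  induction hu using Submodule.span_induction with
  | mem x hx => exact ⟨1, one_pos, by simpa using hx⟩
  | zero => exact ⟨1, one_pos, by simp⟩
  | add x y _ _ hx hy =>
    obtain ⟨n, hn, h⟩ := hx
    obtain ⟨m, hm, k⟩ := hy
    refine ⟨n * m, by positivity, ?_⟩
    rw [smul_add]
    refine L.add_mem ?_ ?_
    · rw [mul_comm, mul_smul]; exact L.smul_of_tower_mem m h
    · rw [mul_smul]; exact L.smul_of_tower_mem n k
  | smul c x _ hx =>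
    obtain ⟨n, hn, h⟩ := hx
    refine ⟨c.den * n, Nat.mul_pos c.den_pos hn, ?_⟩
    have : (c.den * n) • c • x = c.num • n • x := by
      rw [← Nat.cast_smul_eq_nsmul ℚ, ← Nat.cast_smul_eq_nsmul ℚ n, ← Int.cast_smul_eq_zsmul ℚ,
        smul_smul, smul_smul]
      congr 1
      push_cast
      rw [← Rat.mul_den_eq_num c]; ring
    rw [this]
    exact L.smul_mem _ h

lemma aux_surj (B : V →ₗ[ℚ] V →ₗ[ℚ] ℚ) (halt : ∀ v, B v v = 0) (L : Submodule ℤ V)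
    (hspan : Submodule.span ℚ (L : Set V) = ⊤)
    (hint : ∀ x ∈ L, ∀ y ∈ L, ∃ n : ℤ, B x y = (n : ℚ))
    (e₁ f₁ : V) (he1 : e₁ ∈ L) (hf1 : f₁ ∈ L) (h11 : B e₁ f₁ = 1)
    (u : V) (hu : u ∈ dualLattice B L) :
    ∃ (v : V) (d : ℕ), IsPrimitive L v ∧ HasDiv B L v d ∧ vstar v d - u ∈ L := by
  obtain ⟨k, hk⟩ := hu f₁ hf1
  set a := u + ((1 - k : ℤ) : ℚ) • e₁ with ha
  have hau : a - u ∈ L := by rw [ha, add_sub_cancel_left]; exact aux_qsmul_mem he1 _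
  have haf : B a f₁ = 1 := by simp [ha, hk, h11]
  have had : ∀ x ∈ L, ∃ n : ℤ, B a x = n := by
    intro x hx
    obtain ⟨n, hn⟩ := hu x hx
    obtain ⟨m, hm⟩ := hint _ hau x hx
    refine ⟨n + m, ?_⟩
    have : B a x = B u x + B (a - u) x := by simp
    rw [this, hn, hm]; push_cast; rfl
  obtain ⟨N, hN, hNa⟩ := aux_tors L hspan a
  set d := addOrderOf (L.mkQ a) with hd
  have hdpos : 0 < d := by
    rw [hd, addOrderOf_pos_iff, isOfFinAddOrder_iff_nsmul_eq_zero]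
    refine ⟨N, hN, ?_⟩
    rw [← map_nsmul]
    exact (Submodule.Quotient.mk_eq_zero L).2 hNa
  have hdiv : ∀ m : ℤ, (m : ℚ) • a ∈ L ↔ (d : ℤ) ∣ m := by
    intro m
    rw [hd, addOrderOf_dvd_iff_zsmul_eq_zero, ← map_zsmul, Int.cast_smul_eq_zsmul]
    exact (Submodule.Quotient.mk_eq_zero L).symm
  have hd0 : (d : ℚ) ≠ 0 := Nat.cast_ne_zero.mpr hdpos.ne'
  have hst : vstar ((d : ℚ) • a) d = a := by
    rw [vstar, smul_smul, inv_mul_cancel₀ hd0, one_smul]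
  have hvL : (d : ℚ) • a ∈ L := by simpa using (hdiv d).2 dvd_rfl
  refine ⟨(d : ℚ) • a, d, ⟨hvL, ?_⟩, ⟨hdpos, ?_, ?_⟩, by rw [hst]; exact hau⟩
  · apply le_antisymm
    · rintro x ⟨hx1, hx2⟩
      obtain ⟨c, rfl⟩ := Submodule.mem_span_singleton.1 hx1
      obtain ⟨m, hm⟩ := hint _ hx2 f₁ hf1
      have hm' : c * d = m := by simpa [haf] using hm
      have hx2' : (m : ℚ) • a ∈ L := by rw [← hm', mul_smul]; exact hx2
      obtain ⟨n, hn⟩ := (hdiv m).1 hx2'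
      refine Submodule.mem_span_singleton.2 ⟨n, ?_⟩
      rw [← Int.cast_smul_eq_zsmul ℚ, smul_smul, smul_smul, hm', hn]
      congr 1; push_cast; ring
    · rw [Submodule.span_le, Set.singleton_subset_iff]
      exact ⟨Submodule.mem_span_singleton_self (R := ℚ) _, hvL⟩
  · intro x hx
    obtain ⟨n, hn⟩ := had x hx
    exact ⟨n, by simp [hn, mul_comm]⟩
  · exact ⟨f₁, hf1, by simp [haf]⟩

lemma aux_cls {B : V →ₗ[ℚ] V →ₗ[ℚ] ℚ} {L : Submodule ℤ V} (x y : dualLattice B L) :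
    discCls B L x = discCls B L y ↔ (x : V) - y ∈ L :=
  Submodule.Quotient.eq _

end EichlerAux

/-- For any subgroup `Γ` with `Γ_Λ ≤ Γ ≤ Sp(Λ)`, the assignment `v ↦ [v*]` induces a
bijection from the `Γ`-equivalence classes of primitive vectors onto `D_Λ / G`, where
`G` is the image of `Γ` in `Sp(D_Λ)`. -/
theorem symplectic_eichler_criterion_subgroup
    (V : Type) [AddCommGroup V] [Module ℚ V]
    (B : V →ₗ[ℚ] V →ₗ[ℚ] ℚ)
    (halt : ∀ v, B v v = 0)
    (hnd : ∀ v : V, (∀ w, B v w = 0) → v = 0)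
    (L : Submodule ℤ V) (hfg : L.FG)
    (hspan : Submodule.span ℚ (L : Set V) = ⊤)
    (hint : ∀ x ∈ L, ∀ y ∈ L, ∃ n : ℤ, B x y = (n : ℚ))
    (e₁ f₁ e₂ f₂ : V) (L'' : Submodule ℤ V)
    (hdec : OrthoDecompUU B L e₁ f₁ e₂ f₂ L'')
    (Γ : Set (V ≃ₗ[ℚ] V))
    (hΓsp : ∀ γ ∈ Γ, IsIsometry B L γ)
    (hΓgamma : ∀ γ : V ≃ₗ[ℚ] V, InGamma B L γ → γ ∈ Γ)
    (hΓone : (1 : V ≃ₗ[ℚ] V) ∈ Γ)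
    (hΓmul : ∀ γ₁ ∈ Γ, ∀ γ₂ ∈ Γ, γ₁ * γ₂ ∈ Γ)
    (hΓinv : ∀ γ ∈ Γ, γ⁻¹ ∈ Γ) :
    (∀ (v w : V) (dv dw : ℕ) (hv : IsPrimitive L v) (hw : IsPrimitive L w)
        (hdv : HasDiv B L v dv) (hdw : HasDiv B L w dw),
        (∃ γ ∈ Γ, γ v = w) ↔
          ∃ γ, ∃ hγ : γ ∈ Γ,
            discCls B L ⟨γ (vstar v dv), isometry_dual_mem (hΓsp γ hγ) (vstar_mem hdv)⟩ =
              discCls B L ⟨vstar w dw, vstar_mem hdw⟩) ∧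
    (∀ x : DiscGroup B L, ∃ (v : V) (d : ℕ) (hv : IsPrimitive L v) (hd : HasDiv B L v d),
        discCls B L ⟨vstar v d, vstar_mem hd⟩ = x) := by
  obtain ⟨he1, hf1, he2, hf2, -, h11, h22, -, -, hfe, hff, -, -⟩ := hdec
  refine ⟨fun v w dv dw hv hw hdv hdw => ⟨?_, ?_⟩, fun x => ?_⟩
  · rintro ⟨γ, hγ, rfl⟩
    have := aux_div_unique (aux_div_map (hΓsp γ hγ) hdv) hdw
    subst this
    refine ⟨γ, hγ, ?_⟩
    rw [aux_cls]
    simp [vstar]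
  · rintro ⟨γ, hγ, h⟩
    rw [aux_cls] at h
    change γ (vstar v dv) - vstar w dw ∈ L at h
    have hiso := hΓsp γ hγ
    have key : ∀ m : ℤ, (dv : ℤ) ∣ m ↔ (dw : ℤ) ∣ m := by
      intro m
      rw [← aux_order hv hdv, ← aux_order hw hdw, hiso.1, map_smul]
      have h2 := aux_qsmul_mem h m
      rw [smul_sub] at h2
      exact ⟨fun h3 => by simpa using L.sub_mem h3 h2, fun h3 => by simpa using L.add_mem h2 h3⟩
    have hd : dv = dw := Nat.dvd_antisymm
      (Int.natCast_dvd_natCast.mp ((key dw).2 dvd_rfl))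
      (Int.natCast_dvd_natCast.mp ((key dv).1 dvd_rfl))
    subst hd
    have hst : vstar (γ v) dv = γ (vstar v dv) := by simp [vstar]
    have hdv' := aux_div_map hiso hdv
    obtain ⟨δ, hδ, e⟩ := aux_E B halt L hint e₁ f₁ e₂ f₂ he1 hf1 he2 hf2 h11 h22 hfe hff
      (vstar (γ v) dv) (vstar w dv) (vstar_mem hdv') (aux_star_unit hdv') (vstar_mem hdw)
      (aux_star_unit hdw) (by rw [hst, ← neg_sub]; exact L.neg_mem h)
    refine ⟨δ * γ, hΓmul _ (hΓgamma δ hδ) _ hγ, ?_⟩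
    have hd0 : ((dv : ℚ))⁻¹ ≠ 0 := inv_ne_zero (Nat.cast_ne_zero.mpr hdv.1.ne')
    rw [vstar, vstar, map_smul] at e
    rw [LinearEquiv.mul_apply]
    exact smul_right_injective V hd0 e
  · obtain ⟨u, rfl⟩ := Submodule.Quotient.mk_surjective _ x
    obtain ⟨v, d, hv, hd, h⟩ := aux_surj B halt L hspan hint e₁ f₁ he1 hf1 h11 u.1 u.2
    exact ⟨v, d, hv, hd, (aux_cls _ _).2 h⟩
end

section
/- Let Λ be a symplectic lattice admitting an orthogonal direct sum decomposition Λ = U ⊕ Λ' (i.e., of type with d₁ = 1). Then for every element x of the discriminant group D_Λ there exists a primitive vector v ∈ Λ with [v*] = x; that is, the map v ↦ [v*] from primitive vectors of Λ to D_Λ is surjective. -/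
noncomputable section

open Submodule

variable {V : Type} [AddCommGroup V] [Module ℚ V]

lemma exists_pos_smul_mem {V : Type} [AddCommGroup V] [Module ℚ V] (L : Submodule ℤ V)
    (u : V) (hu : u ∈ Submodule.span ℚ (L : Set V)) :
    ∃ n : ℕ, 0 < n ∧ (n : ℤ) • u ∈ L := by
  induction hu using Submodule.span_induction with
  | mem x hx => exact ⟨1, one_pos, by simpa using hx⟩
  | zero => exact ⟨1, one_pos, by simp⟩
  | add x y _ _ hx hy =>
    obtain ⟨n, hn, h1⟩ := hx
    obtain ⟨m, hm, h2⟩ := hy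
    refine ⟨n * m, Nat.mul_pos hn hm, ?_⟩
    have : ((n * m : ℕ) : ℤ) • (x + y) = (m : ℤ) • ((n : ℤ) • x) + (n : ℤ) • ((m : ℤ) • y) := by
      push_cast
      module
    rw [this]
    exact L.add_mem (L.smul_mem _ h1) (L.smul_mem _ h2)
  | smul q x _ hx =>
    obtain ⟨n, hn, h1⟩ := hx
    refine ⟨n * q.den, Nat.mul_pos hn q.den_pos, ?_⟩
    have : ((n * q.den : ℕ) : ℤ) • (q • x) = q.num • ((n : ℤ) • x) := by
      simp only [← Int.cast_smul_eq_zsmul ℚ, smul_smul]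
      congr 1
      push_cast
      rw [mul_assoc, Rat.den_mul_eq_num, mul_comm]
    rw [this]
    exact L.smul_mem _ h1

end


/-- **Surjectivity.** If `Λ = U ⊕ Λ'` (type with `d₁ = 1`), then every element of the
discriminant group is of the form `[v*]` for a primitive vector `v` of `Λ`. -/
theorem eichler_surjectivity
    (V : Type) [AddCommGroup V] [Module ℚ V]
    (B : V →ₗ[ℚ] V →ₗ[ℚ] ℚ)
    (halt : ∀ v, B v v = 0)
    (hnd : ∀ v : V, (∀ w, B v w = 0) → v = 0)
    (L : Submodule ℤ V) (hfg : L.FG)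
    (hspan : Submodule.span ℚ (L : Set V) = ⊤)
    (hint : ∀ x ∈ L, ∀ y ∈ L, ∃ n : ℤ, B x y = (n : ℚ))
    (e f : V) (L' : Submodule ℤ V)
    (hdec : OrthoDecompU B L e f L') :
    ∀ x : DiscGroup B L, ∃ (v : V) (d : ℕ) (hv : IsPrimitive L v) (hd : HasDiv B L v d),
        discCls B L ⟨vstar v d, vstar_mem hd⟩ = x := by
  intro x
  obtain ⟨⟨u, hu⟩, rfl⟩ := Submodule.Quotient.mk_surjective _ x
  obtain ⟨he, hf, -, hef, -, -⟩ := hdec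
  obtain ⟨k, hk⟩ := hu f hf
  set w : V := u + (1 - k) • e with hw
  have hwu : w - u ∈ L := by
    rw [hw, add_sub_cancel_left]
    exact L.smul_mem _ he
  have hed : e ∈ dualLattice B L := fun y hy => hint e he y hy
  have hwd : w ∈ dualLattice B L :=
    (dualLattice B L).add_mem hu ((dualLattice B L).smul_mem _ hed)
  have hwf : B w f = 1 := by
    rw [hw, ← Int.cast_smul_eq_zsmul ℚ, map_add, map_smul, LinearMap.add_apply,
      LinearMap.smul_apply, hk, hef]
    simp
  have hex := exists_pos_smul_mem L w (by rw [hspan]; trivial)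
  classical
  obtain ⟨hdpos, hdL⟩ := Nat.find_spec hex
  have hmin := fun m => Nat.find_min' hex (m := m)
  set d := Nat.find hex
  have hdQ : (d : ℚ) ≠ 0 := Nat.cast_ne_zero.mpr hdpos.ne'
  have hdvd : ∀ m : ℤ, m • w ∈ L → (d : ℤ) ∣ m := by
    intro m hm
    have hdz : (0 : ℤ) < d := by exact_mod_cast hdpos
    have h0 := Int.emod_nonneg m hdz.ne'
    have h1 := Int.emod_lt_of_pos m hdz
    have h2 : (m % d) • w ∈ L := by
      have : (m % d) • w = m • w - (m / d) • ((d : ℤ) • w) := by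
        rw [Int.emod_def]
        module
      rw [this]
      exact L.sub_mem hm (L.smul_mem _ hdL)
    by_contra hnd
    have h3 : m % d ≠ 0 := fun h => hnd (Int.dvd_of_emod_eq_zero h)
    have h4 := hmin (m % d).toNat ⟨by omega, by rwa [Int.toNat_of_nonneg h0]⟩
    omega
  have hcast : (d : ℤ) • w = (d : ℚ) • w := by
    rw [← Int.cast_smul_eq_zsmul ℚ]
    simp
  have hBd : ∀ y, B ((d : ℤ) • w) y = d * B w y := by
    intro y
    rw [hcast, map_smul, LinearMap.smul_apply, smul_eq_mul]
  have hprim : IsPrimitive L ((d : ℤ) • w) := by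
    refine ⟨hdL, le_antisymm ?_ ?_⟩
    · rintro y ⟨hy1, hy2⟩
      obtain ⟨q, rfl⟩ := Submodule.mem_span_singleton.mp hy1
      obtain ⟨m, hm⟩ := hint _ hy2 f hf
      rw [map_smul, LinearMap.smul_apply, hBd, hwf, smul_eq_mul, mul_one] at hm
      have hmw : q • (d : ℤ) • w = m • w := by
        rw [hcast, smul_smul, hm, Int.cast_smul_eq_zsmul]
      obtain ⟨c, hc⟩ := hdvd m (by rw [← hmw]; exact hy2)
      refine Submodule.mem_span_singleton.mpr ⟨c, ?_⟩
      rw [hmw, hc, smul_smul, mul_comm]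
    · rw [Submodule.span_singleton_le_iff_mem]
      exact ⟨Submodule.mem_span_singleton_self _, hdL⟩
  have hdiv : HasDiv B L ((d : ℤ) • w) d := by
    refine ⟨hdpos, ?_, f, hf, by rw [hBd, hwf, mul_one]⟩
    intro y hy
    obtain ⟨n, hn⟩ := hwd y hy
    exact ⟨n, by rw [hBd, hn, mul_comm]⟩
  refine ⟨(d : ℤ) • w, d, hprim, hdiv, ?_⟩
  refine (Submodule.Quotient.eq _).mpr ?_
  show vstar ((d : ℤ) • w) d - u ∈ L
  rw [vstar, hcast, smul_smul, inv_mul_cancel₀ hdQ, one_smul]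
  exact hwu
end

section
/- Let Λ be a symplectic lattice admitting an orthogonal direct sum decomposition Λ = U₁ ⊕ U₂ ⊕ Λ'' with U₁, U₂ isometric to U. If v and w are primitive vectors of Λ with [v*] = [w*] in D_Λ, then there exists γ ∈ Γ_Λ with γ(v) = w. -/
/-- The symplectic transvection `z ↦ z - (m,z) m`. -/
noncomputable def auxT {V : Type} [AddCommGroup V] [Module ℚ V] (B : V →ₗ[ℚ] V →ₗ[ℚ] ℚ)
    (halt : ∀ v, B v v = 0) (m : V) : V ≃ₗ[ℚ] V :=
  LinearEquiv.ofLinearMap (LinearMap.id - (B m).smulRight m) (LinearMap.id + (B m).smulRight m)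
    (by ext z; simp [halt m]) (by ext z; simp [halt m])

lemma auxT_apply {V : Type} [AddCommGroup V] [Module ℚ V] (B : V →ₗ[ℚ] V →ₗ[ℚ] ℚ)
    (halt : ∀ v, B v v = 0) (m z : V) : auxT B halt m z = z - B m z • m := by
  simp [auxT]

lemma auxT_inGamma {V : Type} [AddCommGroup V] [Module ℚ V] (B : V →ₗ[ℚ] V →ₗ[ℚ] ℚ)
    (halt : ∀ v, B v v = 0) (L : Submodule ℤ V)
    (hint : ∀ x ∈ L, ∀ y ∈ L, ∃ n : ℤ, B x y = (n : ℚ)) (m : V) (hm : m ∈ L) :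
    InGamma B L (auxT B halt m) := by
  have hsm : ∀ z, (∃ n : ℤ, B m z = (n : ℚ)) → B m z • m ∈ L := by
    rintro z ⟨n, hn⟩
    rw [hn, Int.cast_smul_eq_zsmul]
    exact L.smul_mem n hm
  refine ⟨⟨fun z => ?_, fun z y => ?_⟩, fun z hz => ?_⟩
  · rw [auxT_apply]
    constructor
    · intro hz
      exact L.sub_mem hz (hsm z (hint m hm z hz))
    · intro hz
      obtain ⟨n, hn⟩ := hint m hm _ hz
      have h1 : B m z = n := by rw [← hn]; simp [halt m]
      have := L.add_mem hz (hsm z ⟨n, h1⟩)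
      simpa using this
  · simp only [auxT_apply, map_sub, LinearMap.sub_apply, map_smul, LinearMap.smul_apply, halt m,
      smul_eq_mul]
    rw [bilin_antisymm B halt z m]; ring
  · rw [auxT_apply]
    have : z - B m z • m - z = -(B m z • m) := by abel
    rw [this]
    apply L.neg_mem
    apply hsm
    obtain ⟨n, hn⟩ := hz m hm
    exact ⟨-n, by rw [bilin_antisymm B halt, hn]; push_cast; rfl⟩

/-- `Γ_Λ`-equivalence. -/
def auxR {V : Type} [AddCommGroup V] [Module ℚ V] (B : V →ₗ[ℚ] V →ₗ[ℚ] ℚ) (L : Submodule ℤ V)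
    (x y : V) : Prop := ∃ γ : V ≃ₗ[ℚ] V, InGamma B L γ ∧ γ x = y

lemma auxR_symm {V : Type} [AddCommGroup V] [Module ℚ V] {B : V →ₗ[ℚ] V →ₗ[ℚ] ℚ}
    {L : Submodule ℤ V} {x y : V} (h : auxR B L x y) : auxR B L y x := by
  obtain ⟨γ, ⟨⟨h1, h2⟩, h3⟩, rfl⟩ := h
  have hi : IsIsometry B L γ.symm := by
    refine ⟨fun z => ?_, fun z t => ?_⟩
    · have := h1 (γ.symm z)
      rw [LinearEquiv.apply_symm_apply] at this
      exact this.symm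
    · have := h2 (γ.symm z) (γ.symm t)
      simpa using this.symm
  refine ⟨γ.symm, ⟨hi, fun z hz => ?_⟩, by simp⟩
  have := L.neg_mem (h3 _ (isometry_dual_mem hi hz))
  simpa using this

lemma auxR_trans {V : Type} [AddCommGroup V] [Module ℚ V] {B : V →ₗ[ℚ] V →ₗ[ℚ] ℚ}
    {L : Submodule ℤ V} {x y z : V} (h : auxR B L x y) (h' : auxR B L y z) : auxR B L x z := by
  obtain ⟨γ, ⟨⟨h1, h2⟩, h3⟩, rfl⟩ := h
  obtain ⟨δ, ⟨⟨k1, k2⟩, k3⟩, rfl⟩ := h'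
  refine ⟨γ.trans δ, ⟨⟨fun z => ?_, fun z t => ?_⟩, fun z hz => ?_⟩, by simp⟩
  · rw [LinearEquiv.trans_apply, ← k1, ← h1]
  · rw [LinearEquiv.trans_apply, LinearEquiv.trans_apply, k2, h2]
  · have := L.add_mem (k3 _ (isometry_dual_mem ⟨h1, h2⟩ hz)) (h3 z hz)
    simpa using this

/-- The edge lemma. -/
lemma auxR_edge {V : Type} [AddCommGroup V] [Module ℚ V] (B : V →ₗ[ℚ] V →ₗ[ℚ] ℚ)
    (halt : ∀ v, B v v = 0) (L : Submodule ℤ V)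
    (hint : ∀ x ∈ L, ∀ y ∈ L, ∃ n : ℤ, B x y = (n : ℚ)) (x m : V) (hm : m ∈ L)
    (h : B x m = 1) : auxR B L x (x + m) := by
  refine ⟨_, auxT_inGamma B halt L hint m hm, ?_⟩
  rw [auxT_apply, bilin_antisymm B halt m x, h]
  simp

lemma aux_bezout (P Q : ℤ) : ∃ u v P' Q' : ℤ, P' * u + Q' * v = 1 ∧ P * Q' - Q * P' = 0 := by
  by_cases h : Int.gcd P Q = 0
  · rw [Int.gcd_eq_zero_iff] at h
    exact ⟨1, 0, 1, 0, by simp, by simp [h.1, h.2]⟩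
  · have hg : (Int.gcd P Q : ℤ) ≠ 0 := by exact_mod_cast h
    obtain ⟨P', hP⟩ := Int.gcd_dvd_left P Q
    obtain ⟨Q', hQ⟩ := Int.gcd_dvd_right P Q
    have hb := Int.gcd_eq_gcd_ab P Q
    generalize (Int.gcd P Q : ℤ) = g at *
    refine ⟨Int.gcdA P Q, Int.gcdB P Q, P', Q', ?_, ?_⟩
    · generalize Int.gcdA P Q = u at *
      generalize Int.gcdB P Q = v at *
      apply mul_left_cancel₀ hg
      subst hP
      subst hQ
      linarith
    · rw [hP, hQ]; ring

/-- Step 1: move `x` so that its `U₁`-component is unimodular. -/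
lemma aux_step1 {V : Type} [AddCommGroup V] [Module ℚ V] (B : V →ₗ[ℚ] V →ₗ[ℚ] ℚ)
    (halt : ∀ v, B v v = 0) (L : Submodule ℤ V)
    (hint : ∀ x ∈ L, ∀ y ∈ L, ∃ n : ℤ, B x y = (n : ℚ)) (e f : V) (he : e ∈ L) (hf : f ∈ L)
    (hef : B e f = 1) (x : V) (hx : x ∈ dualLattice B L) (hs : ∃ l ∈ L, B x l = 1) :
    ∃ m ∈ L, auxR B L x (x + m) ∧ ∃ u v : ℤ, B (x + m) (u • e + v • f) = 1 := by
  obtain ⟨l, hl, hxl⟩ := hs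
  obtain ⟨P, hP⟩ := hx e he
  obtain ⟨Q, hQ⟩ := hx f hf
  obtain ⟨u, v, P', Q', h1, h2⟩ := aux_bezout P Q
  have hq : u • e + v • f ∈ L := L.add_mem (L.smul_mem _ he) (L.smul_mem _ hf)
  have hk : Q' • e - P' • f ∈ L := L.sub_mem (L.smul_mem _ he) (L.smul_mem _ hf)
  obtain ⟨g, hg⟩ := hx _ hq
  obtain ⟨r, hr⟩ := hint l hl _ hq
  have hfe : B f e = -1 := by rw [bilin_antisymm B halt, hef]
  have hkx : B x (Q' • e - P' • f) = 0 := by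
    simp only [← Int.cast_smul_eq_zsmul ℚ, map_sub, map_smul, hP, hQ, smul_eq_mul]
    have : (P : ℚ) * Q' - Q * P' = 0 := by exact_mod_cast h2
    linarith
  have hkq : B (Q' • e - P' • f) (u • e + v • f) = 1 := by
    simp only [← Int.cast_smul_eq_zsmul ℚ, map_sub, map_add, map_smul, LinearMap.sub_apply,
      LinearMap.smul_apply, halt, hef, hfe, smul_eq_mul]
    have : (P' : ℚ) * u + Q' * v = 1 := by exact_mod_cast h1
    linarith
  have hm : l + (1 - g - r) • (Q' • e - P' • f) ∈ L := L.add_mem hl (L.smul_mem _ hk)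
  refine ⟨_, hm, auxR_edge B halt L hint x _ hm ?_, u, v, ?_⟩
  · rw [map_add, map_zsmul, hkx, hxl]; simp
  · generalize u • e + v • f = q0 at *
    rw [← Int.cast_smul_eq_zsmul ℚ (1 - g - r), map_add, map_add, map_smul, LinearMap.add_apply,
      LinearMap.add_apply, LinearMap.smul_apply, hkq, hg, hr]
    simp

/-- Step 2: two elements with independent functionals have a common neighbour. -/
lemma aux_step2 {V : Type} [AddCommGroup V] [Module ℚ V] (B : V →ₗ[ℚ] V →ₗ[ℚ] ℚ)
    (halt : ∀ v, B v v = 0) (L : Submodule ℤ V)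
    (hint : ∀ x ∈ L, ∀ y ∈ L, ∃ n : ℤ, B x y = (n : ℚ)) (y s q f : V) (hq : q ∈ L) (hf : f ∈ L)
    (hy : y ∈ dualLattice B L) (hsy : y - s ∈ L)
    (hyq : B y q = 1) (hsq : B s q = 0) (hsf : B s f = 1) : auxR B L y s := by
  obtain ⟨a, ha⟩ := hy f hf
  obtain ⟨b, hb⟩ := hy _ hsy
  have hbs : B s y = b := by
    rw [map_sub, halt] at hb
    rw [bilin_antisymm B halt]; linarith
  have hm : (1 - (1 - b) * a) • q + (1 - b) • f ∈ L :=
    L.add_mem (L.smul_mem _ hq) (L.smul_mem _ hf)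
  have h1 : B y ((1 - (1 - b) * a) • q + (1 - b) • f) = 1 := by
    rw [map_add, map_zsmul, map_zsmul, hyq, ha]; simp
  have h2 : B s ((1 - (1 - b) * a) • q + (1 - b) • f) = 1 - b := by
    rw [map_add, map_zsmul, map_zsmul, hsq, hsf]; simp
  refine auxR_trans (auxR_edge B halt L hint y _ hm h1) (auxR_symm ?_)
  have h3 : B s ((y - s) + ((1 - (1 - b) * a) • q + (1 - b) • f)) = 1 := by
    rw [map_add, map_sub, h2, hbs, halt]; ring
  have := auxR_edge B halt L hint s _ (L.add_mem hsy hm) h3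
  convert this using 1
  abel

lemma aux_dvd {V : Type} [AddCommGroup V] [Module ℚ V] (B : V →ₗ[ℚ] V →ₗ[ℚ] ℚ)
    (L : Submodule ℤ V) (v w : V) (dv dw : ℕ) (hv : IsPrimitive L v) (hw : w ∈ L)
    (hdv : HasDiv B L v dv) (hdw : 0 < dw) (h : vstar v dv - vstar w dw ∈ L) : dv ∣ dw := by
  have hd : (dv : ℚ) ≠ 0 := Nat.cast_ne_zero.mpr hdv.1.ne'
  have hd' : (dw : ℚ) ≠ 0 := Nat.cast_ne_zero.mpr hdw.ne'
  have h1 : ((dw : ℚ) * (dv : ℚ)⁻¹) • v ∈ L := by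
    have := L.add_mem (L.smul_mem (dw : ℤ) h) hw
    convert this using 1
    rw [← Int.cast_smul_eq_zsmul ℚ, smul_sub, vstar, vstar, smul_smul, smul_smul]
    simp [hd']
  have h2 : ((dw : ℚ) * (dv : ℚ)⁻¹) • v ∈ Submodule.span ℤ {v} := by
    rw [← hv.2]
    exact ⟨Submodule.smul_mem _ _ (Submodule.mem_span_singleton_self v), h1⟩
  obtain ⟨n, hn⟩ := Submodule.mem_span_singleton.1 h2
  obtain ⟨x, -, hx⟩ := hdv.2.2
  have h3 : B (n • v) x = B (((dw : ℚ) * (dv : ℚ)⁻¹) • v) x := by rw [hn]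
  rw [← Int.cast_smul_eq_zsmul ℚ, map_smul, map_smul, LinearMap.smul_apply, LinearMap.smul_apply,
    hx, smul_eq_mul, smul_eq_mul] at h3
  have h4 : (n : ℚ) * dv = dw := by rw [h3]; field_simp
  have h5 : n * dv = (dw : ℤ) := by exact_mod_cast h4
  exact Int.natCast_dvd_natCast.1 ⟨n, by rw [← h5]; ring⟩

/-- **Injectivity.** If `Λ = U₁ ⊕ U₂ ⊕ Λ''` and `v, w` are primitive vectors with
`[v*] = [w*]` in `D_Λ`, then `v` and `w` are `Γ_Λ`-equivalent. -/
theorem eichler_injectivity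
    (V : Type) [AddCommGroup V] [Module ℚ V]
    (B : V →ₗ[ℚ] V →ₗ[ℚ] ℚ)
    (halt : ∀ v, B v v = 0)
    (hnd : ∀ v : V, (∀ w, B v w = 0) → v = 0)
    (L : Submodule ℤ V) (hfg : L.FG)
    (hspan : Submodule.span ℚ (L : Set V) = ⊤)
    (hint : ∀ x ∈ L, ∀ y ∈ L, ∃ n : ℤ, B x y = (n : ℚ))
    (e₁ f₁ e₂ f₂ : V) (L'' : Submodule ℤ V)
    (hdec : OrthoDecompUU B L e₁ f₁ e₂ f₂ L'')
    (v w : V) (dv dw : ℕ) (hv : IsPrimitive L v) (hw : IsPrimitive L w)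
    (hdv : HasDiv B L v dv) (hdw : HasDiv B L w dw)
    (hcls : discCls B L ⟨vstar v dv, vstar_mem hdv⟩ =
      discCls B L ⟨vstar w dw, vstar_mem hdw⟩) :
    ∃ γ : V ≃ₗ[ℚ] V, InGamma B L γ ∧ γ v = w := by
  have hz : vstar v dv - vstar w dw ∈ L := by
    have := (Submodule.Quotient.eq _).1 hcls
    exact this
  have hd : dv = dw := by
    apply Nat.dvd_antisymm
    · exact aux_dvd B L v w dv dw hv hw.1 hdv hdw.1 hz
    · refine aux_dvd B L w v dw dv hw hv.1 hdw hdv.1 ?_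
      have := L.neg_mem hz
      simpa using this
  subst hd
  have hd0 : (dv : ℚ) ≠ 0 := Nat.cast_ne_zero.mpr hdv.1.ne'
  obtain ⟨he1, hf1, he2, hf2, -, h11, h22, hee, hef, hfe, hff, -, -⟩ := hdec
  have hx := vstar_mem hdv
  have hx' := vstar_mem hdw
  have hsurj : ∀ u, HasDiv B L u dv → ∃ l ∈ L, B (vstar u dv) l = 1 := by
    rintro u ⟨-, -, l, hl, h⟩
    refine ⟨l, hl, ?_⟩
    rw [vstar, map_smul, LinearMap.smul_apply, h, smul_eq_mul, inv_mul_cancel₀ hd0]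
  obtain ⟨m, hm, hR, p, q, hpq⟩ :=
    aux_step1 B halt L hint e₁ f₁ he1 hf1 h11 _ hx (hsurj v hdv)
  obtain ⟨m', hm', hR', p', q', hpq'⟩ :=
    aux_step1 B halt L hint e₁ f₁ he1 hf1 h11 _ hx' (hsurj w hdw)
  obtain ⟨a, ha⟩ := hx f₁ hf1
  obtain ⟨b, hb⟩ := hx e₁ he1
  obtain ⟨c, hc⟩ := hx f₂ hf2
  have hLdual : ∀ z ∈ L, z ∈ dualLattice B L := fun z hz x hx => hint z hz x hx
  obtain ⟨t, ht, hs1, hs2, hs3⟩ : ∃ t ∈ L, B (vstar v dv - t) e₁ = 0 ∧ B (vstar v dv - t) f₁ = 0 ∧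
      B (vstar v dv - t) f₂ = 1 := by
    refine ⟨a • e₁ - b • f₁ + (c - 1) • e₂, L.add_mem (L.sub_mem (L.smul_mem _ he1)
      (L.smul_mem _ hf1)) (L.smul_mem _ he2), ?_, ?_, ?_⟩ <;>
    simp only [← Int.cast_smul_eq_zsmul ℚ, map_sub, map_add, map_smul, LinearMap.sub_apply,
      LinearMap.add_apply, LinearMap.smul_apply, halt, h11, h22, hee, hef, hfe, hff, ha, hb, hc,
      bilin_antisymm B halt f₁ e₁, bilin_antisymm B halt e₂ e₁, bilin_antisymm B halt e₂ f₁,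
      smul_eq_mul] <;> push_cast <;> ring
  have hsq : ∀ i j : ℤ, B (vstar v dv - t) (i • e₁ + j • f₁) = 0 := by
    intro i j
    rw [map_add, map_zsmul, map_zsmul, hs1, hs2]; simp
  have hql : ∀ i j : ℤ, i • e₁ + j • f₁ ∈ L := fun i j =>
    L.add_mem (L.smul_mem _ he1) (L.smul_mem _ hf1)
  have hA : auxR B L (vstar v dv + m) (vstar v dv - t) := by
    refine aux_step2 B halt L hint _ _ _ f₂ (hql p q) hf2
      ((dualLattice B L).add_mem hx (hLdual _ hm)) ?_ hpq (hsq p q) hs3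
    convert L.add_mem hm ht using 1
    abel
  have hB : auxR B L (vstar w dv + m') (vstar v dv - t) := by
    refine aux_step2 B halt L hint _ _ _ f₂ (hql p' q') hf2
      ((dualLattice B L).add_mem hx' (hLdual _ hm')) ?_ hpq' (hsq p' q') hs3
    convert L.sub_mem (L.add_mem hm' ht) hz using 1
    abel
  obtain ⟨γ, hγ, hγv⟩ := auxR_trans (auxR_trans hR hA) (auxR_symm (auxR_trans hR' hB))
  refine ⟨γ, hγ, ?_⟩
  rw [vstar, vstar, map_smul] at hγv
  have := congrArg (fun z => (dv : ℚ) • z) hγv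
  simpa [smul_smul, hd0] using this
end

section
/- Let Λ be a symplectic lattice with an orthogonal direct sum decomposition Λ = U₁ ⊕ U₂ ⊕ Λ'' with U₁, U₂ isometric to U, and set Λ' = U₂ ⊕ Λ''. Then every vector of Λ can be transformed by the action of Γ_Λ to a vector lying in Λ'. -/
/-- The map `x ↦ x + s ((l,x) m + (m,x) l)`. -/
def mvMap {V : Type} [AddCommGroup V] [Module ℚ V] (B : V →ₗ[ℚ] V →ₗ[ℚ] ℚ)
    (l m : V) (s : ℚ) : V →ₗ[ℚ] V :=
  LinearMap.id + s • ((B l).smulRight m + (B m).smulRight l)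

lemma mvMap_apply {V : Type} [AddCommGroup V] [Module ℚ V] (B : V →ₗ[ℚ] V →ₗ[ℚ] ℚ)
    (l m : V) (s : ℚ) (x : V) :
    mvMap B l m s x = x + s • (B l x • m + B m x • l) := by
  simp [mvMap]

lemma mvMap_inv {V : Type} [AddCommGroup V] [Module ℚ V] (B : V →ₗ[ℚ] V →ₗ[ℚ] ℚ)
    (halt : ∀ v, B v v = 0) (l m : V) (hlm : B l m = 0) (s : ℚ) (x : V) :
    mvMap B l m s (mvMap B l m (-s) x) = x := by
  have hml : B m l = 0 := by rw [bilin_antisymm B halt, hlm, neg_zero]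
  simp only [mvMap_apply, map_add, map_smul, halt, hlm, hml, smul_eq_mul]
  module

lemma mv_exists {V : Type} [AddCommGroup V] [Module ℚ V] (B : V →ₗ[ℚ] V →ₗ[ℚ] ℚ)
    (halt : ∀ v, B v v = 0) (L : Submodule ℤ V)
    (hint : ∀ x ∈ L, ∀ y ∈ L, ∃ n : ℤ, B x y = (n : ℚ))
    (l m : V) (hlm : B l m = 0) (s : ℚ)
    (hL : ∀ x ∈ dualLattice B L, s • (B l x • m + B m x • l) ∈ L) :
    ∃ γ : V ≃ₗ[ℚ] V, InGamma B L γ ∧ ∀ x, γ x = x + s • (B l x • m + B m x • l) := by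
  have hml : B m l = 0 := by rw [bilin_antisymm B halt, hlm, neg_zero]
  have hsub : ∀ x ∈ L, x ∈ dualLattice B L := fun x hx y hy => hint x hx y hy
  let γ : V ≃ₗ[ℚ] V := LinearEquiv.ofLinear (mvMap B l m s) (mvMap B l m (-s))
    (LinearMap.ext fun x => mvMap_inv B halt l m hlm s x)
    (LinearMap.ext fun x => by
      have := mvMap_inv B halt l m hlm (-s) x
      rw [neg_neg] at this
      exact this)
  have hγ : ∀ x, γ x = x + s • (B l x • m + B m x • l) := fun x => mvMap_apply B l m s x
  refine ⟨γ, ⟨⟨fun v => ⟨fun hv => ?_, fun hv => ?_⟩, fun v w => ?_⟩, fun v hv => ?_⟩, hγ⟩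
  · rw [hγ]
    exact L.add_mem hv (hL v (hsub v hv))
  · have h1 := hL _ (hsub _ hv)
    have h2 : v = γ v - s • (B l (γ v) • m + B m (γ v) • l) := by
      simp only [hγ, map_add, map_smul, halt, hlm, hml, smul_eq_mul]
      module
    rw [h2]
    exact L.sub_mem hv h1
  · simp only [hγ, map_add, map_smul, LinearMap.add_apply, LinearMap.smul_apply, halt, hlm, hml,
      smul_eq_mul]
    rw [bilin_antisymm B halt v m, bilin_antisymm B halt v l]
    ring
  · rw [hγ, add_sub_cancel_left]
    exact hL v hv

lemma inGamma_trans {V : Type} [AddCommGroup V] [Module ℚ V] {B : V →ₗ[ℚ] V →ₗ[ℚ] ℚ}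
    {L : Submodule ℤ V} {γ δ : V ≃ₗ[ℚ] V} (h : InGamma B L γ) (h' : InGamma B L δ) :
    InGamma B L (γ.trans δ) := by
  refine ⟨⟨fun v => (h.1.1 v).trans (h'.1.1 _), fun v w => ?_⟩, fun v hv => ?_⟩
  · simp only [LinearEquiv.trans_apply]
    rw [h'.1.2, h.1.2]
  · have h1 := h'.2 _ (isometry_dual_mem h.1 hv)
    have h2 := L.add_mem h1 (h.2 v hv)
    simpa using h2

lemma inGamma_refl {V : Type} [AddCommGroup V] [Module ℚ V] (B : V →ₗ[ℚ] V →ₗ[ℚ] ℚ)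
    (L : Submodule ℤ V) : InGamma B L (LinearEquiv.refl ℚ V) :=
  ⟨⟨fun _ => Iff.rfl, fun _ _ => rfl⟩, fun v _ => by simp⟩

lemma euclid_moves (P : ℤ → ℤ → Prop)
    (h1 : ∀ a b t, P a b → P (a + t * b) b) (h2 : ∀ a b t, P a b → P a (b + t * a)) :
    ∀ (n : ℕ) (a b : ℤ), a.natAbs = n → P a b → ∃ g, P 0 g := by
  intro n
  induction n using Nat.strong_induction_on with
  | _ n ih =>
    intro a b ha h
    by_cases h0 : a = 0
    · subst h0
      exact ⟨b, h⟩
    -- reduce `b` modulo `a`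
    have h3 : P a (b % a) := by
      have := h2 a b (-(b / a)) h
      rwa [show b + -(b / a) * a = b % a by rw [Int.emod_def]; ring] at this
    by_cases hr : b % a = 0
    · rw [hr] at h3
      have h4 := h1 _ _ (-1) (h2 _ _ 1 h3)
      exact ⟨0 + 1 * a, by simpa using h4⟩
    -- swap the coordinates
    have h4 := h2 _ _ 1 (h1 _ _ (-1) (h2 _ _ 1 h3))
    have h5 : P (-(b % a)) a := by
      convert h4 using 1 <;> ring
    refine ih _ ?_ _ _ rfl h5
    have := Int.emod_nonneg b h0
    have h7 := Int.emod_lt_abs b h0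
    rw [Int.abs_eq_natAbs] at h7
    omega

/-- If `v` can be moved by `Γ_Λ` to `w`. -/
def Moves {V : Type} [AddCommGroup V] [Module ℚ V] (B : V →ₗ[ℚ] V →ₗ[ℚ] ℚ)
    (L : Submodule ℤ V) (v w : V) : Prop :=
  ∃ γ : V ≃ₗ[ℚ] V, InGamma B L γ ∧ γ v = w

lemma moves_step {V : Type} [AddCommGroup V] [Module ℚ V] (B : V →ₗ[ℚ] V →ₗ[ℚ] ℚ)
    (halt : ∀ v, B v v = 0) (L : Submodule ℤ V)
    (hint : ∀ x ∈ L, ∀ y ∈ L, ∃ n : ℤ, B x y = (n : ℚ))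
    (l m : V) (hl : l ∈ L) (hm : m ∈ L) (hlm : B l m = 0) (t : ℤ) {v w w' : V}
    (h : Moves B L v w) (hw : w' = w + (t : ℚ) • (B l w • m + B m w • l)) :
    Moves B L v w' := by
  obtain ⟨γ, hγ, rfl⟩ := h
  obtain ⟨δ, hδ, hδ'⟩ := mv_exists B halt L hint l m hlm t (by
    intro x hx
    obtain ⟨p, hp⟩ := hx l hl
    obtain ⟨q, hq⟩ := hx m hm
    rw [bilin_antisymm B halt, hp, bilin_antisymm B halt m, hq]
    have : (t : ℚ) • ((-(p : ℚ)) • m + (-(q : ℚ)) • l) = (-(t * p)) • m + (-(t * q)) • l := by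
      simp only [← Int.cast_smul_eq_zsmul ℚ]
      push_cast
      module
    rw [this]
    exact L.add_mem (L.smul_mem _ hm) (L.smul_mem _ hl))
  exact ⟨γ.trans δ, inGamma_trans hγ hδ, by rw [LinearEquiv.trans_apply, hδ', hw]⟩

lemma moves_step_one {V : Type} [AddCommGroup V] [Module ℚ V] (B : V →ₗ[ℚ] V →ₗ[ℚ] ℚ)
    (halt : ∀ v, B v v = 0) (L : Submodule ℤ V)
    (hint : ∀ x ∈ L, ∀ y ∈ L, ∃ n : ℤ, B x y = (n : ℚ))
    (l : V) (hl : l ∈ L) (t : ℤ) {v w w' : V}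
    (h : Moves B L v w) (hw : w' = w + ((t : ℚ) * B l w) • l) :
    Moves B L v w' := by
  obtain ⟨γ, hγ, rfl⟩ := h
  obtain ⟨δ, hδ, hδ'⟩ := mv_exists B halt L hint l l (halt l) (t / 2) (by
    intro x hx
    obtain ⟨p, hp⟩ := hx l hl
    rw [bilin_antisymm B halt, hp]
    have : ((t : ℚ) / 2) • ((-(p : ℚ)) • l + (-(p : ℚ)) • l) = (-(t * p)) • l := by
      simp only [← Int.cast_smul_eq_zsmul ℚ]
      push_cast
      module
    rw [this]
    exact L.smul_mem _ hl)
  refine ⟨γ.trans δ, inGamma_trans hγ hδ, ?_⟩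
  rw [LinearEquiv.trans_apply, hδ', hw]
  module

/-- Clearing the `e`-coordinate in a hyperbolic plane. -/
lemma clear_e {V : Type} [AddCommGroup V] [Module ℚ V] (B : V →ₗ[ℚ] V →ₗ[ℚ] ℚ)
    (halt : ∀ v, B v v = 0) (L : Submodule ℤ V)
    (hint : ∀ x ∈ L, ∀ y ∈ L, ∃ n : ℤ, B x y = (n : ℚ))
    (e f : V) (he : e ∈ L) (hf : f ∈ L) (hef : B e f = 1) (v z : V)
    (hez : B e z = 0) (hfz : B f z = 0) (a b : ℤ)
    (h : Moves B L v ((a : ℚ) • e + (b : ℚ) • f + z)) :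
    ∃ g : ℤ, Moves B L v ((g : ℚ) • f + z) := by
  have hfe : B f e = -1 := by rw [bilin_antisymm B halt, hef]
  obtain ⟨g, hg⟩ := euclid_moves
    (fun a b => Moves B L v ((a : ℚ) • e + (b : ℚ) • f + z))
    (fun a b t h => moves_step_one B halt L hint e he t h (by
      simp only [map_add, map_smul, halt, hef, hez, smul_eq_mul]
      push_cast
      module))
    (fun a b t h => moves_step_one B halt L hint f hf (-t) h (by
      simp only [map_add, map_smul, halt, hfe, hfz, smul_eq_mul]
      push_cast
      module)) _ a b rfl h
  exact ⟨g, by simpa using hg⟩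

/-- If `Λ = U₁ ⊕ U₂ ⊕ Λ''` and `Λ' = U₂ ⊕ Λ''`, then every vector of `Λ` can be moved
into `Λ'` by the action of `Γ_Λ`. -/
theorem move_into_complement_of_U
    (V : Type) [AddCommGroup V] [Module ℚ V]
    (B : V →ₗ[ℚ] V →ₗ[ℚ] ℚ)
    (halt : ∀ v, B v v = 0)
    (hnd : ∀ v : V, (∀ w, B v w = 0) → v = 0)
    (L : Submodule ℤ V) (hfg : L.FG)
    (hspan : Submodule.span ℚ (L : Set V) = ⊤)
    (hint : ∀ x ∈ L, ∀ y ∈ L, ∃ n : ℤ, B x y = (n : ℚ))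
    (e₁ f₁ e₂ f₂ : V) (L'' : Submodule ℤ V)
    (hdec : OrthoDecompUU B L e₁ f₁ e₂ f₂ L'') :
    ∀ v ∈ L, ∃ γ : V ≃ₗ[ℚ] V, InGamma B L γ ∧
      γ v ∈ Submodule.span ℤ {e₂, f₂} ⊔ L'' := by
  intro v hv
  obtain ⟨he1, hf1, he2, hf2, -, h1, h2, hee, hef, hfe, hff, hz, hsum⟩ := hdec
  have hee' : B e₂ e₁ = 0 := by rw [bilin_antisymm B halt, hee, neg_zero]
  have hef' : B f₂ e₁ = 0 := by rw [bilin_antisymm B halt, hef, neg_zero]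
  have hfe' : B e₂ f₁ = 0 := by rw [bilin_antisymm B halt, hfe, neg_zero]
  have hff' : B f₂ f₁ = 0 := by rw [bilin_antisymm B halt, hff, neg_zero]
  rw [← hsum] at hv
  obtain ⟨y, hy, z, hzL, rfl⟩ := Submodule.mem_sup.1 hv
  obtain ⟨p, hp, q, hq, rfl⟩ := Submodule.mem_sup.1 hy
  obtain ⟨a, b, rfl⟩ := Submodule.mem_span_pair.1 hp
  obtain ⟨c, d, rfl⟩ := Submodule.mem_span_pair.1 hq
  obtain ⟨z1, z2, z3, z4⟩ := hz z hzL
  simp only [← Int.cast_smul_eq_zsmul ℚ]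
  set v := (a : ℚ) • e₁ + (b : ℚ) • f₁ + ((c : ℚ) • e₂ + (d : ℚ) • f₂) + z with hvdef
  have m0 : Moves B L v ((a : ℚ) • e₁ + (b : ℚ) • f₁ + ((c : ℚ) • e₂ + (d : ℚ) • f₂ + z)) :=
    ⟨LinearEquiv.refl ℚ V, inGamma_refl B L, by rw [hvdef, LinearEquiv.refl_apply]; module⟩
  obtain ⟨g, m1⟩ := clear_e B halt L hint e₁ f₁ he1 hf1 h1 v _
    (by simp [hee, hef, z1]) (by simp [hfe, hff, z2]) a b m0
  have m1' : Moves B L v ((c : ℚ) • e₂ + (d : ℚ) • f₂ + ((g : ℚ) • f₁ + z)) := by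
    convert m1 using 1
    module
  obtain ⟨k, m2⟩ := clear_e B halt L hint e₂ f₂ he2 hf2 h2 v _
    (by simp [hfe', z3]) (by simp [hff', z4]) c d m1'
  have m2' : Moves B L v ((g : ℚ) • f₁ + (k : ℚ) • f₂ + z) := by
    convert m2 using 1
    module
  obtain ⟨r, γ, hγ, hr⟩ := euclid_moves
    (fun a b => Moves B L v ((a : ℚ) • f₁ + (b : ℚ) • f₂ + z))
    (fun a b t h => moves_step B halt L hint e₂ f₁ he2 hf1 hfe' t h (by
      simp only [map_add, map_smul, halt, hfe', h2, hff, z3, z2, smul_eq_mul]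
      push_cast
      module))
    (fun a b t h => moves_step B halt L hint e₁ f₂ he1 hf2 hef t h (by
      simp only [map_add, map_smul, halt, h1, hef, hff', z1, z4, smul_eq_mul]
      push_cast
      module)) _ g k rfl m2'
  refine ⟨γ, hγ, ?_⟩
  rw [hr, Int.cast_zero, zero_smul, zero_add, Int.cast_smul_eq_zsmul ℚ]
  exact Submodule.add_mem_sup
    (Submodule.smul_mem _ _ (Submodule.subset_span (by simp))) hzL
end

section
/- Let Λ = U ⊕ Λ' be a symplectic lattice with U spanned by e, f satisfying (e, f) = 1. Let v ∈ Λ' be a vector that is primitive in Λ with div(v) = d (computed in Λ). Then there exists γ ∈ Γ_Λ such that γ(v) = v + de. -/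
/-- **Step 1.** If `Λ = U ⊕ Λ'` with `U = ⟨e, f⟩`, `(e,f) = 1`, and `v ∈ Λ'` is
primitive in `Λ` with `div(v) = d`, then there is `γ ∈ Γ_Λ` with `γ(v) = v + de`. -/
theorem gamma_translate_by_de
    (V : Type) [AddCommGroup V] [Module ℚ V]
    (B : V →ₗ[ℚ] V →ₗ[ℚ] ℚ)
    (halt : ∀ v, B v v = 0)
    (hnd : ∀ v : V, (∀ w, B v w = 0) → v = 0)
    (L : Submodule ℤ V) (hfg : L.FG)
    (hspan : Submodule.span ℚ (L : Set V) = ⊤)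
    (hint : ∀ x ∈ L, ∀ y ∈ L, ∃ n : ℤ, B x y = (n : ℚ))
    (e f : V) (L' : Submodule ℤ V)
    (hdec : OrthoDecompU B L e f L')
    (v : V) (hv' : v ∈ L') (hv : IsPrimitive L v) (d : ℕ) (hd : HasDiv B L v d) :
    ∃ γ : V ≃ₗ[ℚ] V, InGamma B L γ ∧ γ v = v + (d : ℤ) • e := by
  classical
  obtain ⟨he, hf, hL', hef, horth, hsum⟩ := hdec
  obtain ⟨hd0, hdiv, x, hx, hvx⟩ := hd
  rw [← hsum, Submodule.mem_sup] at hx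
  obtain ⟨u, hu, z, hz, rfl⟩ := hx
  obtain ⟨a, b, rfl⟩ := Submodule.mem_span_pair.mp hu
  have hve : B v e = 0 := by
    rw [bilin_antisymm B halt, (horth v hv').1, neg_zero]
  have hvf : B v f = 0 := by
    rw [bilin_antisymm B halt, (horth v hv').2, neg_zero]
  have hvz : B v z = (d : ℚ) := by
    rw [map_add, map_add, map_zsmul, map_zsmul, hve, hvf] at hvx
    simpa using hvx
  have hzv : B z v = -(d : ℚ) := by
    rw [bilin_antisymm B halt, hvz]
  have hez : B e z = 0 := (horth z hz).1
  have hze : B z e = 0 := by rw [bilin_antisymm B halt, hez, neg_zero]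
  have hev : B e v = 0 := (horth v hv').1
  have hzL : z ∈ L := hL' hz
  let N : V →ₗ[ℚ] V := (B e).smulRight z + (B z).smulRight e
  have hN : ∀ y, N y = B e y • z + B z y • e := fun y => rfl
  have hNN : ∀ y, N (N y) = 0 := by
    intro y
    simp only [hN, map_add, map_smul, hez, hze, halt, smul_eq_mul, mul_zero, add_zero, zero_smul]
  have hNL : ∀ y ∈ dualLattice B L, N y ∈ L := by
    intro y hy
    obtain ⟨p, hp⟩ := hy e he
    obtain ⟨q, hq⟩ := hy z hzL
    have h1 : B e y = ((-p : ℤ) : ℚ) := by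
      rw [bilin_antisymm B halt, hp]; push_cast; ring
    have h2 : B z y = ((-q : ℤ) : ℚ) := by
      rw [bilin_antisymm B halt, hq]; push_cast; ring
    rw [hN, h1, h2, Int.cast_smul_eq_zsmul, Int.cast_smul_eq_zsmul]
    exact L.add_mem (L.smul_mem _ hzL) (L.smul_mem _ he)
  have hLd : ∀ y ∈ L, y ∈ dualLattice B L := fun y hy w hw => hint y hy w hw
  let γ : V ≃ₗ[ℚ] V := LinearEquiv.ofLinearMap (LinearMap.id - N) (LinearMap.id + N)
    (by
      refine LinearMap.ext fun y => ?_
      simp [hNN])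
    (by
      refine LinearMap.ext fun y => ?_
      simp [hNN])
  have hγ : ∀ y, γ y = y - N y := fun y => rfl
  refine ⟨γ, ⟨⟨fun y => ⟨fun hy => ?_, fun hy => ?_⟩, fun y w => ?_⟩, fun y hy => ?_⟩, ?_⟩
  · rw [hγ]
    exact L.sub_mem hy (hNL y (hLd y hy))
  · have h1 : y = γ y + N (γ y) := by
      rw [hγ, map_sub, hNN]; simp
    rw [h1]
    exact L.add_mem hy (hNL _ (hLd _ hy))
  · simp only [hγ, hN, map_add, map_sub, map_smul, LinearMap.add_apply, LinearMap.sub_apply,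
      LinearMap.smul_apply, smul_eq_mul, halt, hez, hze]
    rw [bilin_antisymm B halt y e, bilin_antisymm B halt y z]
    ring
  · rw [hγ]
    have := L.neg_mem (hNL y hy)
    simpa using this
  · rw [hγ, hN, hev, hzv, zero_smul, zero_add, neg_smul, sub_neg_eq_add]
    congr 1
    rw [← Int.cast_smul_eq_zsmul ℚ]
    simp
end

section
/- Let Λ = U ⊕ Λ' be a symplectic lattice with U spanned by e, f satisfying (e, f) = 1. Let v, w ∈ Λ' be vectors that are primitive in Λ with [v*] = [w*] in D_Λ, and set d = div(v). Then there exist γ ∈ Γ_Λ and α ∈ ℤ such that γ(v + de) = w + de + dα f. -/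
lemma aux_div_dvd {V : Type} [AddCommGroup V] [Module ℚ V]
    {B : V →ₗ[ℚ] V →ₗ[ℚ] ℚ} {L : Submodule ℤ V} {v w : V} {d dw : ℕ}
    (hv : IsPrimitive L v) (hw : w ∈ L) (hdv : HasDiv B L v d) (hdw : 0 < dw)
    (h : vstar v d - vstar w dw ∈ L) : d ∣ dw := by
  have hd : (d : ℚ) ≠ 0 := Nat.cast_ne_zero.mpr hdv.1.ne'
  have hdw0 : (dw : ℚ) ≠ 0 := Nat.cast_ne_zero.mpr hdw.ne'
  have h1 : ((dw : ℚ) * (d : ℚ)⁻¹) • v ∈ L := by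
    have h2 := L.add_mem (L.smul_mem (dw : ℤ) h) hw
    convert h2 using 1
    unfold vstar
    rw [← Int.cast_smul_eq_zsmul ℚ, smul_sub, smul_smul, smul_smul]
    push_cast
    rw [mul_inv_cancel₀ hdw0]
    module
  have h3 : ((dw : ℚ) * (d : ℚ)⁻¹) • v ∈ Submodule.span ℤ {v} := by
    rw [← hv.2]
    exact ⟨Submodule.smul_mem _ _ (Submodule.mem_span_singleton_self v), h1⟩
  obtain ⟨k, hk⟩ := Submodule.mem_span_singleton.mp h3
  obtain ⟨x, _, hx⟩ := hdv.2.2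
  have h4 := congrArg (fun z => B z x) hk
  simp only [← Int.cast_smul_eq_zsmul ℚ, map_smul, LinearMap.smul_apply, hx, smul_eq_mul] at h4
  have h5 : (k : ℚ) * d = dw := by rw [h4]; field_simp
  have h6 : k * (d : ℤ) = dw := by exact_mod_cast h5
  exact Int.natCast_dvd_natCast.mp ⟨k, by rw [← h6]; ring⟩

lemma aux_transv_inv {V : Type} [AddCommGroup V] [Module ℚ V]
    (B : V →ₗ[ℚ] V →ₗ[ℚ] ℚ) (halt : ∀ v, B v v = 0) (l m : V) (hlm : B l m = 0) (x : V) :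
    transvection B l m (transvection B l (-m) x) = x := by
  have hml : B m l = 0 := by rw [bilin_antisymm B halt, hlm, neg_zero]
  simp only [transvection, LinearMap.add_apply, LinearMap.id_apply, LinearMap.smulRight_apply,
    map_add, map_smul, map_neg, LinearMap.neg_apply, hlm, hml, halt, smul_eq_mul]
  module

lemma aux_transv_isom {V : Type} [AddCommGroup V] [Module ℚ V]
    (B : V →ₗ[ℚ] V →ₗ[ℚ] ℚ) (halt : ∀ v, B v v = 0) (l m : V) (hlm : B l m = 0) (x y : V) :
    B (transvection B l m x) (transvection B l m y) = B x y := by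
  have hml : B m l = 0 := by rw [bilin_antisymm B halt, hlm, neg_zero]
  simp only [transvection, LinearMap.add_apply, LinearMap.id_apply, LinearMap.smulRight_apply,
    map_add, map_smul, LinearMap.smul_apply, hlm, hml, halt, smul_eq_mul]
  rw [bilin_antisymm B halt x l, bilin_antisymm B halt x m]
  ring

lemma aux_transv_sub {V : Type} [AddCommGroup V] [Module ℚ V]
    (B : V →ₗ[ℚ] V →ₗ[ℚ] ℚ) (halt : ∀ v, B v v = 0) (L : Submodule ℤ V) (l m : V)
    (hl : l ∈ L) (hm : m ∈ L) (x : V) (hx : x ∈ dualLattice B L) :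
    transvection B l m x - x ∈ L := by
  obtain ⟨a, ha⟩ := hx l hl
  obtain ⟨b, hb⟩ := hx m hm
  have h1 := L.add_mem (L.smul_mem (-a) hm) (L.smul_mem (-b) hl)
  convert h1 using 1
  simp only [transvection, LinearMap.add_apply, LinearMap.id_apply, LinearMap.smulRight_apply]
  rw [bilin_antisymm B halt l x, bilin_antisymm B halt m x, ha, hb,
    ← Int.cast_smul_eq_zsmul ℚ, ← Int.cast_smul_eq_zsmul ℚ]
  push_cast
  module

/-- **Step 3.** If `Λ = U ⊕ Λ'` with `U = ⟨e, f⟩`, `(e,f) = 1`, and `v, w ∈ Λ'` are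
primitive in `Λ` with `[v*] = [w*]` and `d = div(v)`, then there are `γ ∈ Γ_Λ` and
`α ∈ ℤ` with `γ(v + de) = w + de + dα f`. -/
theorem gamma_connect_translates
    (V : Type) [AddCommGroup V] [Module ℚ V]
    (B : V →ₗ[ℚ] V →ₗ[ℚ] ℚ)
    (halt : ∀ v, B v v = 0)
    (hnd : ∀ v : V, (∀ w, B v w = 0) → v = 0)
    (L : Submodule ℤ V) (hfg : L.FG)
    (hspan : Submodule.span ℚ (L : Set V) = ⊤)
    (hint : ∀ x ∈ L, ∀ y ∈ L, ∃ n : ℤ, B x y = (n : ℚ))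
    (e f : V) (L' : Submodule ℤ V)
    (hdec : OrthoDecompU B L e f L')
    (v w : V) (hv' : v ∈ L') (hw' : w ∈ L')
    (hv : IsPrimitive L v) (hw : IsPrimitive L w)
    (d dw : ℕ) (hdv : HasDiv B L v d) (hdw : HasDiv B L w dw)
    (hcls : discCls B L ⟨vstar v d, vstar_mem hdv⟩ =
      discCls B L ⟨vstar w dw, vstar_mem hdw⟩) :
    ∃ (γ : V ≃ₗ[ℚ] V) (α : ℤ), InGamma B L γ ∧
      γ (v + (d : ℤ) • e) = w + (d : ℤ) • e + ((d : ℤ) * α) • f := by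
  obtain ⟨heL, hfL, hL'L, hef, horth, hsup⟩ := hdec
  have hsub : vstar v d - vstar w dw ∈ L := by
    have h := (Submodule.Quotient.eq _).mp hcls
    exact h
  have hsub' : vstar w dw - vstar v d ∈ L := by
    have := L.neg_mem hsub
    rwa [neg_sub] at this
  have hddw : d = dw := Nat.dvd_antisymm
    (aux_div_dvd hv (hL'L hw') hdv hdw.1 hsub) (aux_div_dvd hw (hL'L hv') hdw hdv.1 hsub')
  subst hddw
  have hd : (d : ℚ) ≠ 0 := Nat.cast_ne_zero.mpr hdv.1.ne'
  set u : V := vstar v d - vstar w d with hu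
  have hdu : v = w + (d : ℚ) • u := by
    rw [hu]; unfold vstar
    rw [smul_sub, smul_smul, smul_smul, mul_inv_cancel₀ hd]; module
  have hfu : B f u = 0 := by
    rw [hu]; unfold vstar
    rw [map_sub, map_smul, map_smul, (horth v hv').2, (horth w hw').2]; simp
  have heu : B e u = 0 := by
    rw [hu]; unfold vstar
    rw [map_sub, map_smul, map_smul, (horth v hv').1, (horth w hw').1]; simp
  have hfu' : B f (-u) = 0 := by rw [map_neg, hfu, neg_zero]
  have hdual : ∀ x ∈ L, x ∈ dualLattice B L := fun x hx y hy => hint x hx y hy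
  have hinv1 := aux_transv_inv B halt f u hfu
  have hinv2 := aux_transv_inv B halt f (-u) hfu'
  rw [neg_neg] at hinv2
  let γ : V ≃ₗ[ℚ] V := LinearEquiv.ofLinear (transvection B f u) (transvection B f (-u))
    (LinearMap.ext hinv1) (LinearMap.ext hinv2)
  have hγ : ∀ x, γ x = transvection B f u x := fun x => rfl
  have huL : u ∈ L := hsub
  obtain ⟨n, hn⟩ := hdv.2.1 u huL
  refine ⟨γ, -n, ⟨⟨fun x => ⟨fun hx => ?_, fun hx => ?_⟩, fun x y => ?_⟩, fun x hx => ?_⟩, ?_⟩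
  · have := L.add_mem (aux_transv_sub B halt L f u hfL huL x (hdual x hx)) hx
    rwa [sub_add_cancel] at this
  · have := L.add_mem
      (aux_transv_sub B halt L f (-u) hfL (L.neg_mem huL) (γ x) (hdual _ hx)) hx
    rwa [sub_add_cancel, hγ, hinv2] at this
  · exact aux_transv_isom B halt f u hfu x y
  · exact aux_transv_sub B halt L f u hfL huL x hx
  · have hfe : B f e = -1 := by rw [bilin_antisymm B halt, hef]
    have hue : B u e = 0 := by rw [bilin_antisymm B halt, heu, neg_zero]
    have huv : B u v = -(n * d) := by rw [bilin_antisymm B halt, hn]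
    rw [hγ]
    simp only [transvection, LinearMap.add_apply, LinearMap.id_apply, LinearMap.smulRight_apply,
      ← Int.cast_smul_eq_zsmul ℚ, map_add, map_smul, hfe, hue, huv, (horth v hv').2, smul_eq_mul]
    push_cast
    nth_rewrite 1 [hdu]
    module
end
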